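/- arXiv:1710.03731 — 7 statements merged into one kernel-verified Lean document; each statement's English description precedes it below -/
import Mathlib

section
/- Let X be a topological space and let V = (v_n)_{n∈ℕ} be a decreasing weight system on X satisfying condition (Ω). Let E be a complex vector space equipped with an increasing sequence of seminorms (‖·‖_N)_{N∈ℕ} satisfying condition (DN). Then the pair (E, V) satisfies condition (S_2)*: for every n ∈ ℕ there exist m > n and N ∈ ℕ such that for every k > m and every M ∈ ℕ there exist K ∈ ℕ and C > 0 with v_m(x)·‖e‖_M ≤ C(v_n(x)·‖e‖_N + v_k(x)·‖e‖_K) for all e ∈ E and x ∈ X. -/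
/-!
Iterating (DN) against the same `N` yields `‖e‖_M ^ (q + 1) ≤ D * ‖e‖_N ^ q * ‖e‖_K` with `q` as
large as desired (`exists_pow_succ_le_of_DN`). Once `1 / (q + 1) ≤ θ`, condition (Ω) together with
`v_k ≤ v_n` implies `v_m ^ (q + 1) ≤ C ^ (q + 1) * v_n ^ q * v_k` (`pow_succ_le_of_rpow`).
Multiplying the two, `(v_m ‖e‖_M) ^ (q + 1)` is at most a constant times
`(v_n ‖e‖_N) ^ q * (v_k ‖e‖_K) ≤ (v_n ‖e‖_N + v_k ‖e‖_K) ^ (q + 1)`, and (S₂)* follows by taking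
roots.
-/

open Filter

/-- Iterated (DN): the exponent of `p K` in the interpolation inequality can be made
arbitrarily small. Each application of (DN) replaces `q` by `2 * q + 1`. -/
lemma exists_pow_succ_le_of_DN {E : Type*} [AddCommGroup E] [Module ℂ E]
    (p : ℕ → Seminorm ℂ E) (N : ℕ)
    (hN : ∀ M : ℕ, N < M → ∃ K : ℕ, M < K ∧ ∃ C : ℝ, 0 < C ∧
      ∀ e : E, (p M e) ^ 2 ≤ C * p N e * p K e)
    (M : ℕ) (hM : N < M) (r : ℕ) :
    ∃ q : ℕ, r ≤ q ∧ ∃ K : ℕ, N < K ∧ ∃ D : ℝ, 0 < D ∧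
      ∀ e : E, (p M e) ^ (q + 1) ≤ D * (p N e) ^ q * p K e := by
  induction r with
  | zero => exact ⟨0, le_rfl, M, hM, 1, one_pos, fun e => by simp⟩
  | succ r ih =>
    obtain ⟨q, hq, K, hK, D, hD, h⟩ := ih
    obtain ⟨L, hL, C, hC, hKL⟩ := hN K hK
    refine ⟨2 * q + 1, by omega, L, by omega, D ^ 2 * C, by positivity, fun e => ?_⟩
    have hNe : 0 ≤ p N e := apply_nonneg _ _
    have hMe : 0 ≤ p M e := apply_nonneg _ _
    calc (p M e) ^ (2 * q + 1 + 1) = ((p M e) ^ (q + 1)) ^ 2 := by ring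
      _ ≤ (D * (p N e) ^ q * p K e) ^ 2 := by gcongr; exact h e
      _ = (D * (p N e) ^ q) ^ 2 * (p K e) ^ 2 := by ring
      _ ≤ (D * (p N e) ^ q) ^ 2 * (C * p N e * p L e) := by gcongr; exact hKL e
      _ = D ^ 2 * C * (p N e) ^ (2 * q + 1) * p L e := by ring

/-- Since `w ≤ v`, the exponent `θ` of `w` may be lowered to `1 / (q + 1)`. -/
lemma pow_succ_le_of_rpow {u v w C θ : ℝ} {q : ℕ} (hu : 0 ≤ u) (hv : 0 < v) (hw : 0 < w)
    (hwv : w ≤ v) (hC : 0 < C) (hq : 1 ≤ θ * (q + 1))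
    (h : u ≤ C * v ^ (1 - θ) * w ^ θ) :
    u ^ (q + 1) ≤ C ^ (q + 1) * v ^ q * w := by
  have key : (v ^ (1 - θ) * w ^ θ) ^ (q + 1) ≤ v ^ q * w := by
    -- The surplus exponent `t` of `w` is moved onto the larger base `v`.
    obtain ⟨t, ht⟩ : ∃ t, t = θ * (q + 1) - 1 := ⟨_, rfl⟩
    have ht0 : 0 ≤ t := by linarith
    calc (v ^ (1 - θ) * w ^ θ) ^ (q + 1)
        = v ^ ((1 - θ) * ((q + 1 : ℕ) : ℝ)) * w ^ (θ * ((q + 1 : ℕ) : ℝ)) := by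
          rw [mul_pow, Real.rpow_mul_natCast hv.le, Real.rpow_mul_natCast hw.le]
      _ = v ^ ((q : ℝ) - t) * (w ^ t * w) := by
          rw [← Real.rpow_add_one hw.ne']
          congr 2 <;> push_cast <;> linarith
      _ ≤ v ^ ((q : ℝ) - t) * (v ^ t * w) := by gcongr
      _ = v ^ q * w := by
          rw [← mul_assoc, ← Real.rpow_add hv, sub_add_cancel, Real.rpow_natCast]
  calc u ^ (q + 1) ≤ (C * v ^ (1 - θ) * w ^ θ) ^ (q + 1) := by gcongr
    _ = C ^ (q + 1) * (v ^ (1 - θ) * w ^ θ) ^ (q + 1) := by rw [mul_assoc, mul_pow]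
    _ ≤ C ^ (q + 1) * (v ^ q * w) := by gcongr
    _ = C ^ (q + 1) * v ^ q * w := by ring

/-- If a decreasing weight system `V = (v n)` on a topological space `X`
satisfies condition (Ω) and an increasing sequence of seminorms on a complex vector space
`E` satisfies condition (DN), then the pair `(E, V)` satisfies condition (S₂)*. -/
theorem pair_satisfies_S2star_of_Omega_DN
    {X : Type*} [TopologicalSpace X] {E : Type*} [AddCommGroup E] [Module ℂ E]
    (v : ℕ → X → ℝ)
    (hcont : ∀ n, Continuous (v n))
    (hpos : ∀ n x, 0 < v n x)
    (hdec : ∀ n x, v (n + 1) x ≤ v n x)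
    (hΩ : ∀ n : ℕ, ∃ m : ℕ, n < m ∧ ∀ k : ℕ, m < k →
      ∃ θ : ℝ, θ ∈ Set.Ioo (0 : ℝ) 1 ∧ ∃ C : ℝ, 0 < C ∧
        ∀ x : X, v m x ≤ C * (v n x) ^ (1 - θ) * (v k x) ^ θ)
    (p : ℕ → Seminorm ℂ E)
    (hinc : ∀ N : ℕ, ∀ e : E, p N e ≤ p (N + 1) e)
    (hDN : ∃ N : ℕ, ∀ M : ℕ, N < M → ∃ K : ℕ, M < K ∧ ∃ C : ℝ, 0 < C ∧
      ∀ e : E, (p M e) ^ 2 ≤ C * p N e * p K e) :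
    ∀ n : ℕ, ∃ m : ℕ, n < m ∧ ∃ N : ℕ, ∀ k : ℕ, m < k → ∀ M : ℕ,
      ∃ K : ℕ, ∃ C : ℝ, 0 < C ∧
        ∀ e : E, ∀ x : X, v m x * p M e ≤ C * (v n x * p N e + v k x * p K e) := by
  intro n
  obtain ⟨m, hnm, hm⟩ := hΩ n
  obtain ⟨N, hN⟩ := hDN
  refine ⟨m, hnm, N, fun k hk M => ?_⟩
  obtain ⟨θ, ⟨hθ, -⟩, C, hC, hv⟩ := hm k hk
  obtain ⟨r, hr⟩ := exists_nat_gt (1 / θ)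
  -- (DN) only concerns indices above `N`, so `M` is enlarged first.
  obtain ⟨q, hq, K, -, D, hD, hp⟩ :=
    exists_pow_succ_le_of_DN p N hN (max M (N + 1)) (by omega) r
  have hqθ : 1 ≤ θ * (q + 1) := by
    have h1 : (r : ℝ) ≤ q := by exact_mod_cast hq
    rw [div_lt_iff₀ hθ] at hr
    nlinarith
  refine ⟨K, C ^ (q + 1) * D + 1, by positivity, fun e x => ?_⟩
  have hvn := hpos n x
  have hvm := hpos m x
  have hvk := hpos k x
  have hkn : v k x ≤ v n x :=
    antitone_nat_of_succ_le (f := fun i => v i x) (fun i => hdec i x) (hnm.trans hk).le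
  have hMM : p M e ≤ p (max M (N + 1)) e :=
    monotone_nat_of_le_succ (f := fun i => p i e) (fun i => hinc i e) (le_max_left _ _)
  have hM0 : 0 ≤ p M e := apply_nonneg _ _
  have hN0 : 0 ≤ p N e := apply_nonneg _ _
  have hK0 : 0 ≤ p K e := apply_nonneg _ _
  have hV := pow_succ_le_of_rpow hvm.le hvn hvk hkn hC hqθ (hv x)
  have hP : (p M e) ^ (q + 1) ≤ D * (p N e) ^ q * p K e :=
    (pow_le_pow_left₀ hM0 hMM _).trans (hp e)
  refine le_of_pow_le_pow_left₀ q.succ_ne_zero (by positivity) ?_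
  set S := v n x * p N e + v k x * p K e with hS
  have h1 : v n x * p N e ≤ S := le_add_of_nonneg_right (by positivity)
  have h2 : v k x * p K e ≤ S := le_add_of_nonneg_left (by positivity)
  have hS0 : 0 ≤ S := by positivity
  have hB : 1 ≤ C ^ (q + 1) * D + 1 := le_add_of_nonneg_left (by positivity)
  calc (v m x * p M e) ^ (q + 1) = (v m x) ^ (q + 1) * (p M e) ^ (q + 1) := mul_pow _ _ _
    _ ≤ (C ^ (q + 1) * (v n x) ^ q * v k x) * (D * (p N e) ^ q * p K e) := by gcongr
    _ = C ^ (q + 1) * D * ((v n x * p N e) ^ q * (v k x * p K e)) := by ring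
    _ ≤ (C ^ (q + 1) * D + 1) * (S ^ q * S) := by gcongr; linarith
    _ ≤ (C ^ (q + 1) * D + 1) ^ (q + 1) * (S ^ q * S) := by
        gcongr
        exact le_self_pow₀ hB q.succ_ne_zero
    _ = ((C ^ (q + 1) * D + 1) * S) ^ (q + 1) := by rw [mul_pow, pow_succ S]
end

section
/- Let β = (β_j)_{j∈ℕ} be a strictly increasing sequence of positive numbers with β_j → ∞ and sup_j β_{j+1}/β_j < ∞. Let X be a topological space and V = (v_n)_{n∈ℕ} a decreasing weight system on X. Then V satisfies condition (Ω) if and only if the pair (Λ_∞(β), V) satisfies condition (S_2)*: for every n ∈ ℕ there exist m > n and N ∈ ℕ such that for every k > m and every M ∈ ℕ there exist K ∈ ℕ and C > 0 with v_m(x)·‖c‖_M ≤ C(v_n(x)·‖c‖_N + v_k(x)·‖c‖_K) for all c ∈ Λ_∞(β) and x ∈ X. -/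
/-! Both conditions are compared through the inequality
`v_m e^{Mβ_j} ≤ C (v_n e^{Nβ_j} + v_k e^{Kβ_j})`, which is (S₂)* tested on the unit vectors.

(Ω) ⇒ (S₂)*: with `N = 0` and `K ≥ M / θ`, weighted AM-GM applied to the squares gives
`v_m² e^{2Mβ_j} ≤ C² (v_n² + v_k² e^{2Kβ_j})` (`sq_le_of_geom`); multiplying by `|c_j|²` and summing over `j` yields
(S₂)* (`norm_le_of_sq_le`).

(S₂)* ⇒ (Ω): the unit vectors with `M = N + 1` and `L = K + 1` give
`v_m ≤ C (v_n e^{-β_j} + v_k e^{Lβ_j})` for every `j`. Since `β_{j+1} ≤ B β_j`, for every `t ≥ 0`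
some `β_j` lies in `[t, β_0 + B t]` (`exists_beta_between`). Taking
`t = θ log (v_n / v_k)` with `θ = 1 / (2BL)` bounds both terms by a constant times
`v_n (v_k / v_n)^θ` (`interpolate`). -/

open Filter

/-- The `n`-th norm of the power series space `Λ_∞(β)`:
`‖c‖_n = (∑_j |c_j|² e^{2 n β_j})^{1/2}`. -/
noncomputable def lamInfNorm (β : ℕ → ℝ) (n : ℕ) (c : ℕ → ℂ) : ℝ :=
  Real.sqrt (∑' j : ℕ, ‖c j‖ ^ 2 * Real.exp (2 * (n : ℝ) * β j))

/-- Membership in `Λ_∞(β)`: all the defining square sums are finite. -/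
def memLamInf (β : ℕ → ℝ) (c : ℕ → ℂ) : Prop :=
  ∀ n : ℕ, Summable (fun j : ℕ => ‖c j‖ ^ 2 * Real.exp (2 * (n : ℝ) * β j))

lemma lamInfNorm_single (β : ℕ → ℝ) (n j : ℕ) :
    lamInfNorm β n (Pi.single j 1) = Real.exp ((n : ℝ) * β j) := by
  unfold lamInfNorm
  rw [tsum_eq_single j]
  · rw [Pi.single_eq_same, norm_one, one_pow, one_mul,
      show 2 * (n : ℝ) * β j = (n : ℝ) * β j + (n : ℝ) * β j by ring, Real.exp_add,
      Real.sqrt_mul_self (Real.exp_pos _).le]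
  · intro i hi
    simp [Pi.single_eq_of_ne hi]

lemma memLamInf_single (β : ℕ → ℝ) (j : ℕ) : memLamInf β (Pi.single j 1) := by
  intro n
  apply summable_of_ne_finset_zero (s := {j})
  intro i hi
  have hi' : i ≠ j := by simpa using hi
  simp [Pi.single_eq_of_ne hi']

/-- The values of `β` are dense on a multiplicative scale. The summand `β 0` covers the values of
`t` below `β 0`. -/
lemma exists_beta_between {β : ℕ → ℝ} (hβpos : ∀ j, 0 < β j) (hβtop : Tendsto β atTop atTop)
    {B : ℝ} (hB : 0 ≤ B) (hstep : ∀ j, β (j + 1) ≤ B * β j) {t : ℝ} (ht : 0 ≤ t) :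
    ∃ j, t ≤ β j ∧ β j ≤ β 0 + B * t := by
  classical
  have hex : ∃ j, t ≤ β j := (hβtop.eventually_ge_atTop t).exists
  refine ⟨Nat.find hex, Nat.find_spec hex, ?_⟩
  rcases h : Nat.find hex with _ | i
  · have := mul_nonneg hB ht
    linarith
  · have hlt : β i < t := not_le.mp (Nat.find_min hex (by omega))
    have h1 := mul_le_mul_of_nonneg_left hlt.le hB
    have h2 := hstep i
    have h3 := hβpos 0
    linarith

/-- A two-term estimate valid for all exponents `β j` interpolates to a product estimate, with an
exponent `1 / (2BL)` that does not depend on `a`, `b`, `w`. -/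
lemma interpolate {β : ℕ → ℝ} (hβpos : ∀ j, 0 < β j) (hβtop : Tendsto β atTop atTop)
    {B : ℝ} (hB : 1 ≤ B) (hstep : ∀ j, β (j + 1) ≤ B * β j) {L C : ℝ} (hL : 1 ≤ L) (hC : 0 < C)
    {a b w : ℝ} (hb : 0 < b) (hba : b ≤ a)
    (hw : ∀ j, w ≤ C * (a * Real.exp (-β j) + b * Real.exp (L * β j))) :
    w ≤ C * (1 + Real.exp (L * β 0)) * a ^ (1 - 1 / (2 * B * L)) * b ^ (1 / (2 * B * L)) := by
  have ha : 0 < a := hb.trans_le hba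
  have hBL : 1 ≤ B * L := one_le_mul_of_one_le_of_one_le hB hL
  set θ := 1 / (2 * B * L) with hθ
  have hθ0 : 0 ≤ θ := by positivity
  have hθ2 : B * L * θ = 1 / 2 := by
    rw [hθ]; field_simp
  have hθ1 : θ ≤ 1 / 2 := by nlinarith
  set R := Real.log a - Real.log b with hR
  have hR0 : 0 ≤ R := sub_nonneg.mpr (Real.log_le_log hb hba)
  obtain ⟨j, hj1, hj2⟩ := exists_beta_between hβpos hβtop (zero_le_one.trans hB) hstep
    (mul_nonneg hθ0 hR0)
  have hprod : a ^ (1 - θ) * b ^ θ = Real.exp (Real.log a - θ * R) := by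
    rw [Real.rpow_def_of_pos ha, Real.rpow_def_of_pos hb, ← Real.exp_add, hR]
    congr 1; ring
  have h1 : a * Real.exp (-β j) ≤ Real.exp (Real.log a - θ * R) := by
    nth_rewrite 1 [← Real.exp_log ha]
    rw [← Real.exp_add]
    exact Real.exp_le_exp.mpr (by linarith)
  have h2 : b * Real.exp (L * β j) ≤ Real.exp (L * β 0) * Real.exp (Real.log a - θ * R) := by
    nth_rewrite 1 [← Real.exp_log hb]
    rw [← Real.exp_add, ← Real.exp_add]
    apply Real.exp_le_exp.mpr
    have h3 : L * β j ≤ L * (β 0 + B * (θ * R)) :=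
      mul_le_mul_of_nonneg_left hj2 (zero_le_one.trans hL)
    have h4 : L * (β 0 + B * (θ * R)) = L * β 0 + R / 2 := by
      linear_combination R * hθ2
    have h5 : θ * R ≤ 1 / 2 * R := mul_le_mul_of_nonneg_right hθ1 hR0
    linarith
  calc w ≤ C * (a * Real.exp (-β j) + b * Real.exp (L * β j)) := hw j
    _ ≤ C * (Real.exp (Real.log a - θ * R)
          + Real.exp (L * β 0) * Real.exp (Real.log a - θ * R)) := by gcongr
    _ = C * (1 + Real.exp (L * β 0)) * a ^ (1 - θ) * b ^ θ := by
        rw [mul_assoc _ (a ^ (1 - θ)), hprod]; ring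

/-- Coefficientwise squared estimates sum up to an estimate between the norms. -/
lemma norm_le_of_sq_le {β : ℕ → ℝ} {M N K : ℕ} {C a b w : ℝ} (hC : 0 < C) (ha : 0 < a)
    (hb : 0 < b)
    (h : ∀ j, w ^ 2 * Real.exp (2 * (M : ℝ) * β j) ≤
      C ^ 2 * (a ^ 2 * Real.exp (2 * (N : ℝ) * β j) + b ^ 2 * Real.exp (2 * (K : ℝ) * β j)))
    {c : ℕ → ℂ} (hc : memLamInf β c) :
    w * lamInfNorm β M c ≤ C * (a * lamInfNorm β N c + b * lamInfNorm β K c) := by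
  have hsq : ∀ n : ℕ, lamInfNorm β n c ^ 2
      = ∑' j : ℕ, ‖c j‖ ^ 2 * Real.exp (2 * (n : ℝ) * β j) := fun n =>
    Real.sq_sqrt (tsum_nonneg fun j => by positivity)
  have hnn : ∀ n : ℕ, 0 ≤ lamInfNorm β n c := fun n => Real.sqrt_nonneg _
  have hN := hnn N
  have hK := hnn K
  have hsum : w ^ 2 * lamInfNorm β M c ^ 2 ≤
      C ^ 2 * (a ^ 2 * lamInfNorm β N c ^ 2 + b ^ 2 * lamInfNorm β K c ^ 2) := by
    rw [hsq, hsq, hsq, ← tsum_mul_left, ← tsum_mul_left, ← tsum_mul_left,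
      ← ((hc N).mul_left _).tsum_add ((hc K).mul_left _), ← tsum_mul_left]
    refine ((hc M).mul_left _).tsum_le_tsum (fun j => ?_)
      ((((hc N).mul_left _).add ((hc K).mul_left _)).mul_left _)
    have := mul_le_mul_of_nonneg_left (h j) (sq_nonneg ‖c j‖)
    linarith
  refine le_of_sq_le_sq ?_ (by positivity)
  have hcross : 0 ≤ C ^ 2 * (2 * (a * lamInfNorm β N c) * (b * lamInfNorm β K c)) := by
    positivity
  nlinarith

/-- The weighted AM-GM step: `M ≤ K θ` lets `e^{2Ms}` be absorbed into `(e^{2Ks})^θ`. -/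
lemma sq_le_of_geom {M K C θ a b w s : ℝ} (hθ0 : 0 < θ) (hθ1 : θ < 1) (ha : 0 < a) (hb : 0 < b)
    (hw : 0 < w) (hs : 0 ≤ s) (hMK : M ≤ K * θ) (h : w ≤ C * a ^ (1 - θ) * b ^ θ) :
    w ^ 2 * Real.exp (2 * M * s) ≤ C ^ 2 * (a ^ 2 + b ^ 2 * Real.exp (2 * K * s)) := by
  have hE : Real.exp (2 * M * s) ≤ Real.exp (2 * K * s) ^ θ := by
    rw [← Real.exp_mul]
    apply Real.exp_le_exp.mpr
    nlinarith [mul_le_mul_of_nonneg_right hMK hs]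
  have hsq : ∀ {y : ℝ} (p : ℝ), 0 < y → (y ^ p) ^ 2 = (y ^ 2) ^ p := fun {y} p hy => by
    rw [← Real.rpow_natCast, ← Real.rpow_natCast, ← Real.rpow_mul hy.le, ← Real.rpow_mul hy.le,
      mul_comm]
  have hgm := Real.geom_mean_le_arith_mean2_weighted (sub_nonneg.mpr hθ1.le) hθ0.le
    (sq_nonneg a) (show 0 ≤ b ^ 2 * Real.exp (2 * K * s) by positivity) (by ring)
  have hle : (1 - θ) * a ^ 2 + θ * (b ^ 2 * Real.exp (2 * K * s)) ≤
      a ^ 2 + b ^ 2 * Real.exp (2 * K * s) := by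
    have h1 : 0 ≤ a ^ 2 := by positivity
    have h2 : 0 ≤ b ^ 2 * Real.exp (2 * K * s) := by positivity
    nlinarith
  calc w ^ 2 * Real.exp (2 * M * s)
      ≤ (C * a ^ (1 - θ) * b ^ θ) ^ 2 * Real.exp (2 * K * s) ^ θ := by gcongr
    _ = C ^ 2 * ((a ^ 2) ^ (1 - θ) * (b ^ 2 * Real.exp (2 * K * s)) ^ θ) := by
        rw [Real.mul_rpow (sq_nonneg b) (Real.exp_pos _).le, mul_pow, mul_pow, hsq _ ha,
          hsq _ hb]
        ring
    _ ≤ C ^ 2 * (a ^ 2 + b ^ 2 * Real.exp (2 * K * s)) := by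
        gcongr
        exact hgm.trans hle

/-- For a shift-stable exponent sequence `β`, a decreasing weight system `V`
satisfies (Ω) iff the pair `(Λ_∞(β), V)` satisfies condition (S₂)*. -/
theorem Omega_iff_LambdaInf_S2star
    {X : Type*} [TopologicalSpace X]
    (β : ℕ → ℝ) (hβpos : ∀ j, 0 < β j) (hβmono : StrictMono β)
    (hβtop : Tendsto β atTop atTop)
    (hβstable : ∃ B : ℝ, ∀ j : ℕ, β (j + 1) / β j ≤ B)
    (v : ℕ → X → ℝ)
    (hcont : ∀ n, Continuous (v n))
    (hpos : ∀ n x, 0 < v n x)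
    (hdec : ∀ n x, v (n + 1) x ≤ v n x) :
    (∀ n : ℕ, ∃ m : ℕ, n < m ∧ ∀ k : ℕ, m < k →
      ∃ θ : ℝ, θ ∈ Set.Ioo (0 : ℝ) 1 ∧ ∃ C : ℝ, 0 < C ∧
        ∀ x : X, v m x ≤ C * (v n x) ^ (1 - θ) * (v k x) ^ θ) ↔
    (∀ n : ℕ, ∃ m : ℕ, n < m ∧ ∃ N : ℕ, ∀ k : ℕ, m < k → ∀ M : ℕ,
      ∃ K : ℕ, ∃ C : ℝ, 0 < C ∧
        ∀ c : ℕ → ℂ, memLamInf β c → ∀ x : X,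
          v m x * lamInfNorm β M c ≤
            C * (v n x * lamInfNorm β N c + v k x * lamInfNorm β K c)) := by
  have hanti : ∀ x, Antitone fun n => v n x := fun x => antitone_nat_of_succ_le fun n => hdec n x
  constructor
  · intro hΩ n
    obtain ⟨m, hnm, hm⟩ := hΩ n
    refine ⟨m, hnm, 0, fun k hk M => ?_⟩
    obtain ⟨θ, ⟨hθ0, hθ1⟩, C, hC, hv⟩ := hm k hk
    refine ⟨⌈(M : ℝ) / θ⌉₊, C, hC, fun c hc x => ?_⟩
    refine norm_le_of_sq_le hC (hpos n x) (hpos k x) (fun j => ?_) hc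
    have hMK : (M : ℝ) ≤ (⌈(M : ℝ) / θ⌉₊ : ℝ) * θ := (div_le_iff₀ hθ0).mp (Nat.le_ceil _)
    simpa using sq_le_of_geom hθ0 hθ1 (hpos n x) (hpos k x) (hpos m x) (hβpos j).le hMK (hv x)
  · intro hS n
    obtain ⟨m, hnm, N, hm⟩ := hS n
    refine ⟨m, hnm, fun k hk => ?_⟩
    obtain ⟨K, C, hC, hv⟩ := hm k hk (N + 1)
    obtain ⟨B, hBq⟩ := hβstable
    have hstep : ∀ j, β (j + 1) ≤ B * β j := fun j => (div_le_iff₀ (hβpos j)).mp (hBq j)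
    have hB : 1 ≤ B :=
      ((one_le_div (hβpos 0)).mpr (hβmono (Nat.lt_succ_self 0)).le).trans (hBq 0)
    have hL : (1 : ℝ) ≤ (K : ℝ) + 1 := by
      have : (0 : ℝ) ≤ K := Nat.cast_nonneg K
      linarith
    have hBL : 1 ≤ B * ((K : ℝ) + 1) := one_le_mul_of_one_le_of_one_le hB hL
    refine ⟨1 / (2 * B * ((K : ℝ) + 1)), ⟨by positivity, ?_⟩,
      C * (1 + Real.exp (((K : ℝ) + 1) * β 0)), by positivity, fun x => ?_⟩
    · rw [div_lt_one (by positivity)]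
      linarith
    · refine interpolate hβpos hβtop hB hstep hL hC (hpos k x) (hanti x (hnm.trans hk).le)
        fun j => ?_
      have h := hv _ (memLamInf_single β j) x
      simp only [lamInfNorm_single] at h
      -- Divide the estimate for the `j`-th unit vector by `e^{(N+1)β_j}`.
      have h1 := mul_le_mul_of_nonneg_right h (Real.exp_pos (-(((N + 1 : ℕ) : ℝ) * β j))).le
      rw [mul_assoc, ← Real.exp_add, add_neg_cancel, Real.exp_zero, mul_one] at h1
      refine h1.trans ?_
      rw [mul_assoc, add_mul, mul_assoc, mul_assoc, ← Real.exp_add, ← Real.exp_add]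
      have hβj := hβpos j
      have hn := hpos n x
      have hk' := hpos k x
      have hN : (0 : ℝ) ≤ (N : ℝ) * β j := by positivity
      gcongr
      · push_cast
        linarith
      · push_cast
        linarith
end

section
/- Let β = (β_j)_{j∈ℕ} be a strictly increasing sequence of positive numbers with β_j → ∞ and sup_j β_{j+1}/β_j < ∞. For n ≥ 1 let E_n := {c ∈ ℂ^ℕ : ‖c‖_{E_n} := (Σ_{j=0}^∞ |c_j|² e^{2β_j/n})^{1/2} < ∞}, so that E_n ⊆ E_m with ‖c‖_{E_m} ≤ ‖c‖_{E_n} for m ≥ n. Let X be a topological space and W = (w_N)_{N∈ℕ} an increasing weight system on X. Then W satisfies condition (DN) if and only if the following condition (S_2)* holds: for every n ≥ 1 there exist m > n and N ∈ ℕ such that for every k > m and every M ∈ ℕ there exist K ∈ ℕ and C > 0 with ‖c‖_{E_m}·w_M(x) ≤ C(‖c‖_{E_n}·w_N(x) + ‖c‖_{E_k}·w_K(x)) for all c ∈ E_n and x ∈ X. -/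
/-!
Both conditions are log-convexity statements, so they are compared by interpolation.

(DN) ⇒ (S₂)*: take `m = 2 n`. Cauchy–Schwarz gives `‖c‖_m² ≤ ‖c‖_n ‖c‖_k` for `k ≥ n`
(`dualStepNorm_two_mul_sq_le`), and multiplying by `w_M² ≤ C w_N w_K` and using `ab ≤ (a + b)²`
yields the claim.

(S₂)* ⇒ (DN): use the condition with `n = 1` and `k = m + 1` on unit vectors. Writing
`u_M = log (w_M / w_N)`, one gets for every `j` that `u_M ≤ L + a β_j` or
`u_M + δ β_j ≤ L + u_K`, with `a, δ > 0` independent of `M`. At the first `j` where the former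
holds, shift-stability of `β` lets the two bounds be balanced, so that
`(1 + ε) u_M ≤ u_K + D` with `ε > 0` independent of `M` (`balance`). Iterating this until
`(1 + ε)^p ≥ 2` gives `2 u_M ≤ u_K + D`, which is (DN) after exponentiation.
-/

open Filter

/-- The norm of the `n`-th step space `E_n` of the dual of the power series space
`Λ_0(β)`: `‖c‖_{E_n} = (∑_j |c_j|² e^{2 β_j / n})^{1/2}`. -/
noncomputable def dualStepNorm (β : ℕ → ℝ) (n : ℕ) (c : ℕ → ℂ) : ℝ :=
  Real.sqrt (∑' j : ℕ, ‖c j‖ ^ 2 * Real.exp (2 * β j / (n : ℝ)))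

/-- Membership in the step space `E_n`. -/
def memDualStep (β : ℕ → ℝ) (n : ℕ) (c : ℕ → ℂ) : Prop :=
  Summable (fun j : ℕ => ‖c j‖ ^ 2 * Real.exp (2 * β j / (n : ℝ)))

theorem dualStepNorm_nonneg (β : ℕ → ℝ) (n : ℕ) (c : ℕ → ℂ) : 0 ≤ dualStepNorm β n c :=
  Real.sqrt_nonneg _

/-- On the `j`-th unit vector the step norms are the weights `e^{β_j / n}`. -/
theorem dualStepNorm_single (β : ℕ → ℝ) (n j : ℕ) :
    dualStepNorm β n (Pi.single j 1) = Real.exp (β j / n) := by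
  unfold dualStepNorm
  rw [tsum_eq_single j]
  · rw [Real.sqrt_eq_iff_mul_self_eq (by positivity) (by positivity), ← Real.exp_add]
    simp only [Pi.single_eq_same, norm_one, one_pow, one_mul]
    congr 1
    ring
  · intro i hi
    simp [Pi.single_eq_of_ne hi]

theorem memDualStep_single (β : ℕ → ℝ) (n j : ℕ) : memDualStep β n (Pi.single j 1) := by
  unfold memDualStep
  apply summable_of_ne_finset_zero (s := {j})
  intro i hi
  simp [Pi.single_eq_of_ne (by simpa using hi : i ≠ j)]

theorem memDualStep_mono {β : ℕ → ℝ} (hβ : ∀ j, 0 < β j) {n k : ℕ} (hn : 1 ≤ n) (hnk : n ≤ k)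
    {c : ℕ → ℂ} (hc : memDualStep β n c) : memDualStep β k c := by
  refine Summable.of_nonneg_of_le (fun j => by positivity) (fun j => ?_) hc
  have := hβ j
  have : (0 : ℝ) < n := by exact_mod_cast hn
  gcongr

/-- Interpolation of `E_{2n}` between `E_n` and `E_k`: the weight `e^{2β/(2n)}` is the
geometric mean of `e^{2β/n}` and `1`, and `1 ≤ e^{2β/k}`. -/
theorem dualStepNorm_two_mul_sq_le {β : ℕ → ℝ} (hβ : ∀ j, 0 < β j) {n k : ℕ} (hn : 1 ≤ n)
    (hnk : n ≤ k) {c : ℕ → ℂ} (hc : memDualStep β n c) :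
    dualStepNorm β (2 * n) c ^ 2 ≤ dualStepNorm β n c * dualStepNorm β k c := by
  have hck := memDualStep_mono hβ hn hnk hc
  have hsq : dualStepNorm β (2 * n) c ^ 2
      = ∑' j : ℕ, ‖c j‖ ^ 2 * Real.exp (2 * β j / ((2 * n : ℕ) : ℝ)) :=
    Real.sq_sqrt (tsum_nonneg fun j => by positivity)
  rw [hsq]
  refine Real.tsum_le_of_sum_le (fun j => by positivity) fun s => ?_
  have hn0 : (0 : ℝ) < n := by exact_mod_cast hn
  calc ∑ j ∈ s, ‖c j‖ ^ 2 * Real.exp (2 * β j / ((2 * n : ℕ) : ℝ))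
      ≤ ∑ j ∈ s, √(‖c j‖ ^ 2 * Real.exp (2 * β j / n)) *
          √(‖c j‖ ^ 2 * Real.exp (2 * β j / k)) := by
        refine Finset.sum_le_sum fun j _ => ?_
        rw [← Real.sqrt_mul (by positivity)]
        apply Real.le_sqrt_of_sq_le
        have h1 : (1 : ℝ) ≤ Real.exp (2 * β j / k) :=
          Real.one_le_exp (by have := hβ j; positivity)
        have h2 : Real.exp (2 * β j / ((2 * n : ℕ) : ℝ)) ^ 2 = Real.exp (2 * β j / n) := by
          rw [← Real.exp_nat_mul]
          congr 1
          push_cast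
          field_simp
        rw [mul_pow, h2]
        calc (‖c j‖ ^ 2) ^ 2 * Real.exp (2 * β j / n)
            = (‖c j‖ ^ 2) ^ 2 * Real.exp (2 * β j / n) * 1 := by ring
          _ ≤ (‖c j‖ ^ 2) ^ 2 * Real.exp (2 * β j / n) * Real.exp (2 * β j / k) := by gcongr
          _ = _ := by ring
    _ ≤ √(∑ j ∈ s, ‖c j‖ ^ 2 * Real.exp (2 * β j / n)) *
          √(∑ j ∈ s, ‖c j‖ ^ 2 * Real.exp (2 * β j / k)) :=
        Real.sum_sqrt_mul_sqrt_le s (fun j => by positivity) (fun j => by positivity)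
    _ ≤ dualStepNorm β n c * dualStepNorm β k c := by
        unfold dualStepNorm
        gcongr
        · exact hc.sum_le_tsum s fun j _ => by positivity
        · exact hck.sum_le_tsum s fun j _ => by positivity

/-- Balancing the two alternatives at the first index where the growing bound `L + a β_j` exceeds
`u`; shift-stability `β_{j+1} ≤ B β_j` compares it with the previous index. -/
theorem balance {β : ℕ → ℝ} (hβpos : ∀ j, 0 < β j) (hβtop : Tendsto β atTop atTop)
    {B : ℝ} (hB : 0 < B) (hβB : ∀ j, β (j + 1) ≤ B * β j) {a δ : ℝ} (ha : 0 < a) (hδ : 0 < δ)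
    {L u v : ℝ} (hv : 0 ≤ v) (h : ∀ j, u ≤ L + a * β j ∨ u + δ * β j ≤ L + v) :
    (1 + δ / (a * B)) * u ≤ v + (1 + δ / (a * B)) * (|L| + a * β 0) := by
  have hε : 0 < δ / (a * B) := by positivity
  have h0 := hβpos 0
  have hL := le_abs_self L
  have hex : ∃ j, u ≤ L + a * β j := by
    obtain ⟨j, hj⟩ := (hβtop.eventually_ge_atTop ((u - L) / a)).exists
    refine ⟨j, ?_⟩
    rw [div_le_iff₀ ha] at hj
    linarith
  classical
  have hj := Nat.find_spec hex
  rcases hi : Nat.find hex with _ | i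
  · rw [hi] at hj
    have : (1 + δ / (a * B)) * u ≤ (1 + δ / (a * B)) * (|L| + a * β 0) := by
      gcongr
      linarith
    linarith
  · rw [hi] at hj
    have hnot := Nat.find_min hex (m := i) (by omega)
    have hgood := (h i).resolve_left hnot
    have h1 : u ≤ L + a * (B * β i) := hj.trans (by gcongr; exact hβB i)
    have h2 : δ / (a * B) * u ≤ δ / (a * B) * L + δ * β i := by
      calc δ / (a * B) * u ≤ δ / (a * B) * (L + a * (B * β i)) := by gcongr
        _ = _ := by field_simp
    have h3 : (1 + δ / (a * B)) * L ≤ (1 + δ / (a * B)) * (|L| + a * β 0) := by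
      gcongr
      have : 0 < a * β 0 := by positivity
      linarith
    linarith

/-- For a shift-stable exponent sequence `β`, an increasing weight system `W`
satisfies (DN) iff the pair `(W, Λ'_0(β))` satisfies condition (S₂)*. -/
theorem DN_iff_dualLambdaZero_S2star
    {X : Type*} [TopologicalSpace X]
    (β : ℕ → ℝ) (hβpos : ∀ j, 0 < β j) (hβmono : StrictMono β)
    (hβtop : Tendsto β atTop atTop)
    (hβstable : ∃ B : ℝ, ∀ j : ℕ, β (j + 1) / β j ≤ B)
    (w : ℕ → X → ℝ)
    (hcont : ∀ N, Continuous (w N))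
    (hpos : ∀ N x, 0 < w N x)
    (hincw : ∀ N x, w N x ≤ w (N + 1) x) :
    (∃ N : ℕ, ∀ M : ℕ, N < M → ∃ K : ℕ, M < K ∧ ∃ C : ℝ, 0 < C ∧
      ∀ x : X, (w M x) ^ 2 ≤ C * w N x * w K x) ↔
    (∀ n : ℕ, 1 ≤ n → ∃ m : ℕ, n < m ∧ ∃ N : ℕ, ∀ k : ℕ, m < k → ∀ M : ℕ,
      ∃ K : ℕ, ∃ C : ℝ, 0 < C ∧
        ∀ c : ℕ → ℂ, memDualStep β n c → ∀ x : X,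
          dualStepNorm β m c * w M x ≤
            C * (dualStepNorm β n c * w N x + dualStepNorm β k c * w K x)) := by
  have hmono : ∀ x, Monotone fun N => w N x := fun x => monotone_nat_of_le_succ (hincw · x)
  constructor
  · rintro ⟨N, hN⟩ n hn
    refine ⟨2 * n, by omega, N, fun k hk M => ?_⟩
    obtain ⟨K, -, C, hC, hK⟩ := hN (max M (N + 1)) (by omega)
    refine ⟨K, √C, by positivity, fun c hc x => ?_⟩
    have hM : w M x ≤ w (max M (N + 1)) x := hmono x (le_max_left _ _)
    have hE := dualStepNorm_two_mul_sq_le hβpos hn (by omega : n ≤ k) hc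
    have hn0 := dualStepNorm_nonneg β n c
    have hk0 := dualStepNorm_nonneg β k c
    have hN0 := hpos N x
    have hK0 := hpos K x
    have hM0 := hpos M x
    apply le_of_sq_le_sq _ (by positivity)
    rw [mul_pow, mul_pow, Real.sq_sqrt hC.le]
    calc dualStepNorm β (2 * n) c ^ 2 * w M x ^ 2
        ≤ (dualStepNorm β n c * dualStepNorm β k c) * (C * w N x * w K x) := by
          gcongr
          exact (pow_le_pow_left₀ hM0.le hM 2).trans (hK x)
      _ = C * ((dualStepNorm β n c * w N x) * (dualStepNorm β k c * w K x)) := by ring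
      _ ≤ C * (dualStepNorm β n c * w N x + dualStepNorm β k c * w K x) ^ 2 := by
          gcongr
          have h1 : 0 ≤ dualStepNorm β n c * w N x := by positivity
          have h2 : 0 ≤ dualStepNorm β k c * w K x := by positivity
          nlinarith
  · intro hS
    obtain ⟨m, hm, N, hN⟩ := hS 1 le_rfl
    obtain ⟨B, hB⟩ := hβstable
    have hB0 : 0 < B := (div_pos (hβpos 1) (hβpos 0)).trans_le (hB 0)
    have hβB : ∀ j, β (j + 1) ≤ B * β j := fun j => (div_le_iff₀ (hβpos j)).1 (hB j)
    have hm1 : (1 : ℝ) < m := by exact_mod_cast hm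
    have ha : 0 < 1 - 1 / (m : ℝ) := by
      rw [sub_pos, div_lt_one (by linarith)]
      exact hm1
    have hδ : 0 < 1 / (m : ℝ) - 1 / ((m + 1 : ℕ) : ℝ) := by
      rw [sub_pos]
      push_cast
      gcongr
      linarith
    set a : ℝ := 1 - 1 / (m : ℝ) with hadef
    set δ : ℝ := 1 / (m : ℝ) - 1 / ((m + 1 : ℕ) : ℝ) with hδdef
    have hε : 0 < δ / (a * B) := by positivity
    set ε : ℝ := δ / (a * B) with hεdef
    let u : ℕ → X → ℝ := fun M x => Real.log (w M x / w N x)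
    have hw : ∀ M x, w M x = w N x * Real.exp (u M x) := fun M x => by
      have := hpos N x
      rw [Real.exp_log (div_pos (hpos M x) this)]
      field_simp
    have hu0 : ∀ M, N ≤ M → ∀ x, 0 ≤ u M x := fun M hM x =>
      Real.log_nonneg ((one_le_div (hpos N x)).2 (hmono x hM))
    have humono : ∀ M K, M ≤ K → ∀ x, u M x ≤ u K x := fun M K hMK x => by
      have := hpos N x
      have := hpos M x
      exact Real.log_le_log (by positivity) (by gcongr; exact hmono x hMK)
    have step : ∀ M, ∃ K, ∃ D : ℝ, ∀ x, (1 + ε) * u M x ≤ u K x + D := by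
      intro M
      obtain ⟨K, C, hC, hK⟩ := hN (m + 1) (by omega) M
      refine ⟨max K N, (1 + ε) * (|Real.log (2 * C)| + a * β 0), fun x => ?_⟩
      refine balance hβpos hβtop hB0 hβB ha hδ (hu0 _ (le_max_right _ _) x) fun j => ?_
      have h := hK _ (memDualStep_single β 1 j) x
      rw [dualStepNorm_single, dualStepNorm_single, dualStepNorm_single, hw M x, hw K x] at h
      have hNx := hpos N x
      have h' : Real.exp (β j / m + u M x) ≤
          C * (Real.exp (β j) + Real.exp (β j / (m + 1 : ℕ) + u K x)) := by
        rw [Real.exp_add, Real.exp_add]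
        refine le_of_mul_le_mul_right ?_ hNx
        rw [Nat.cast_one, div_one] at h
        linarith
      have h2C : 2 * C = Real.exp (Real.log (2 * C)) := (Real.exp_log (by positivity)).symm
      -- the sum is at most twice its larger term
      rcases le_total (Real.exp (β j / (m + 1 : ℕ) + u K x)) (Real.exp (β j)) with hle | hle
      · left
        have h3 : Real.exp (β j / m + u M x) ≤ 2 * C * Real.exp (β j) := by nlinarith
        rw [h2C, ← Real.exp_add, Real.exp_le_exp] at h3
        have : a * β j = β j - β j / m := by rw [hadef]; ring
        linarith
      · right
        have h3 : Real.exp (β j / m + u M x) ≤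
            2 * C * Real.exp (β j / (m + 1 : ℕ) + u K x) := by nlinarith
        rw [h2C, ← Real.exp_add, Real.exp_le_exp] at h3
        have : δ * β j = β j / m - β j / (m + 1 : ℕ) := by rw [hδdef]; ring
        have := humono K (max K N) (le_max_left _ _) x
        linarith
    have iter : ∀ p : ℕ, ∀ M, ∃ K, ∃ D : ℝ, ∀ x, (1 + ε) ^ p * u M x ≤ u K x + D := by
      intro p
      induction p with
      | zero => exact fun M => ⟨M, 0, fun x => by simp⟩
      | succ p ih =>
        intro M
        obtain ⟨K, D, h⟩ := ih M
        obtain ⟨K', D', h'⟩ := step K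
        refine ⟨K', (1 + ε) * D + D', fun x => ?_⟩
        calc (1 + ε) ^ (p + 1) * u M x = (1 + ε) * ((1 + ε) ^ p * u M x) := by ring
          _ ≤ (1 + ε) * (u K x + D) := by gcongr; exact h x
          _ ≤ u K' x + ((1 + ε) * D + D') := by linarith [h' x]
    obtain ⟨p, hp⟩ := pow_unbounded_of_one_lt 2 (by linarith : 1 < 1 + ε)
    refine ⟨N, fun M hM => ?_⟩
    obtain ⟨K, D, h⟩ := iter p M
    refine ⟨max K (M + 1), by omega, Real.exp D, Real.exp_pos _, fun x => ?_⟩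
    have h1 : 2 * u M x ≤ (1 + ε) ^ p * u M x := by
      have := hu0 M hM.le x
      gcongr
    have h2 : 2 * u M x ≤ D + u (max K (M + 1)) x := by
      linarith [h x, humono K (max K (M + 1)) (le_max_left _ _) x]
    have hNx := hpos N x
    rw [hw M x, hw (max K (M + 1)) x]
    calc (w N x * Real.exp (u M x)) ^ 2 = w N x ^ 2 * Real.exp (2 * u M x) := by
          rw [mul_pow, ← Real.exp_nat_mul]
          norm_num
      _ ≤ w N x ^ 2 * Real.exp (D + u (max K (M + 1)) x) := by gcongr
      _ = Real.exp D * w N x * (w N x * Real.exp (u (max K (M + 1)) x)) := by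
          rw [Real.exp_add]
          ring
end

section
/- Let M_p and A_p be weight sequences satisfying (M.1) and (M.2), with p! ≺ M_pA_p, and assume S^{(M_p)}_{(A_p)}(ℝ^d) contains a nonzero function. Let H be the constant from condition (M.2) for M_p. Let w and v be positive continuous functions on ℝ^d such that v(x)/w(x) → 0 as |x| → ∞ and v(x+t) ≤ C·w(x)·e^{A(λt)} for all x, t ∈ ℝ^d, for some constants C, λ > 0, where A is the associated function of A_p. Then for all h, k > 0 with 0 < kH < h, the space S^{(M_p)}_{(A_p)}(ℝ^d) is dense in {φ ∈ C^∞(ℝ^d) : ‖φ‖_{B^{M_p,h}_w} < ∞} with respect to the norm ‖·‖_{B^{M_p,k}_v}; that is, for every φ ∈ C^∞(ℝ^d) with ‖φ‖_{B^{M_p,h}_w} < ∞ and every ε > 0 there exists χ ∈ S^{(M_p)}_{(A_p)}(ℝ^d) with ‖φ − χ‖_{B^{M_p,k}_v} ≤ ε. -/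
/-!
The approximation is done in two steps, a cutoff followed by a regularization, both built from the
given nonzero element of `S^{(M_p)}_{(A_p)}`. Translating and normalizing it gives `θ` in the space
with `θ 0 = 1`; normalizing `|φ₀|²` gives `ψ` in the space with integral one.

* Cutoff (`exists_cutoff`). The function `g = φ θ(δ ·)` is close to `φ`: the terms of the Leibniz
  formula that differentiate `θ(δ ·)` carry a factor `δ`, and the remaining factor `1 - θ(δ x)` is
  small on compact sets while `v / w` is small off compact sets. Log-convexity of `M_p` makes the
  geometric growth rates of derivatives add up in a product (`norm_derivAlong_mul_le`), which
  lowers the regularity from `1/h` to `1/(kH)`. The growth condition on `v`, `w` gives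
  `w(x) ≥ c exp(-A(λ x))`, and (M.2) for `A_p` absorbs products of weights, so every derivative of
  `g` decays faster than all dilates of `exp(-A)` (`rapidDecay_of_weighted`).
* Regularization (`exists_regularization`). Put `χ = g * ψ_δ` with `ψ_δ = δ^{-d} ψ(δ^{-1} ·)`.
  Letting the derivatives fall on `ψ_δ` shows that `χ` lies in the space (`memGS.conv`). Letting
  them fall on `g`, the difference `g - χ` is an average of `g(x) - g(x - δ y)`, which the mean value
  theorem bounds at the cost of one more derivative of `g`; (M.2) for `M_p` pays for this derivative
  with the factor `H` per order, which lowers the regularity from `1/(kH)` to `1/k`.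

Estimates are carried out for derivatives along arbitrary lists of coordinate directions, where
induction is available; `Bnorm_le_iff` translates them to the multi-index norms through the symmetry
of mixed partial derivatives.
-/

open scoped ENNReal
open MeasureTheory Filter

/-- A weight sequence: positive with `M_{p+1}/M_p → ∞`. -/
def IsWeightSeq (Mp : ℕ → ℝ) : Prop :=
  (∀ p, 0 < Mp p) ∧ Tendsto (fun p => Mp (p + 1) / Mp p) atTop atTop

/-- Condition (M.1) (logarithmic convexity). -/
def CondM1 (Mp : ℕ → ℝ) : Prop := ∀ p : ℕ, 1 ≤ p → Mp p ^ 2 ≤ Mp (p - 1) * Mp (p + 1)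

/-- Condition (M.2) (stability under ultradifferential operators) with constants `C0, H`. -/
def CondM2 (Mp : ℕ → ℝ) (C0 H : ℝ) : Prop :=
  ∀ p q : ℕ, Mp (p + q) ≤ C0 * H ^ (p + q) * Mp p * Mp q

/-- The associated function `M(t) = sup_p log (t^p M_0 / M_p)` for `t ≠ 0`, `M(0) = 0`. -/
noncomputable def assocFn (Mp : ℕ → ℝ) (t : ℝ) : ℝ :=
  if t = 0 then 0 else ⨆ p : ℕ, Real.log (t ^ p * Mp 0 / Mp p)

/-- Iterated partial derivative along a list of coordinate directions. -/
noncomputable def derivAlong {d : ℕ} :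
    List (Fin d) → (EuclideanSpace ℝ (Fin d) → ℂ) → EuclideanSpace ℝ (Fin d) → ℂ
  | [], f => f
  | (i :: l), f => fun x => fderiv ℝ (derivAlong l f) x (EuclideanSpace.single i 1)

/-- The partial derivative `∂^α` for a multi-index `α`. -/
noncomputable def mderiv {d : ℕ} (α : Fin d → ℕ) (f : EuclideanSpace ℝ (Fin d) → ℂ) :
    EuclideanSpace ℝ (Fin d) → ℂ :=
  derivAlong ((List.finRange d).flatMap fun i => List.replicate (α i) i) f

/-- The norm `‖φ‖_{B^{M_p,h}_v} = sup_α sup_x h^{|α|} |∂^α φ(x)| v(x) / M_{|α|} ∈ [0,∞]`. -/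
noncomputable def Bnorm {d : ℕ} (Mp : ℕ → ℝ) (h : ℝ) (v : EuclideanSpace ℝ (Fin d) → ℝ)
    (φ : EuclideanSpace ℝ (Fin d) → ℂ) : ℝ≥0∞ :=
  ⨆ (α : Fin d → ℕ) (x : EuclideanSpace ℝ (Fin d)),
    ENNReal.ofReal (h ^ (∑ i, α i) * ‖mderiv α φ x‖ * v x / Mp (∑ i, α i))

/-- The Gelfand-Shilov norm `‖φ‖_{S^{M_p,h}_{A_p,λ}} ∈ [0,∞]`. -/
noncomputable def Snorm {d : ℕ} (Mp Ap : ℕ → ℝ) (h lam : ℝ)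
    (φ : EuclideanSpace ℝ (Fin d) → ℂ) : ℝ≥0∞ :=
  Bnorm Mp h (fun x => Real.exp (assocFn Ap (lam * ‖x‖))) φ

/-- Membership in the Gelfand-Shilov space `S^{(M_p)}_{(A_p)}(ℝ^d)`. -/
def memGS {d : ℕ} (Mp Ap : ℕ → ℝ) (φ : EuclideanSpace ℝ (Fin d) → ℂ) : Prop :=
  ContDiff ℝ (⊤ : ℕ∞) φ ∧ ∀ h : ℝ, 0 < h → Snorm Mp Ap h h φ < ⊤

/-- The relation `p! ≺ M_p A_p`. -/
def factLtMA (Mp Ap : ℕ → ℝ) : Prop :=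
  ∀ h : ℝ, 0 < h → ∃ C : ℝ, 0 < C ∧ ∀ p : ℕ, (p.factorial : ℝ) ≤ C * h ^ p * Mp p * Ap p


/-! ### Partial derivatives along lists -/

section DerivAlong

variable {d : ℕ}

lemma derivAlong_cons_apply (i : Fin d) (l : List (Fin d)) (f : EuclideanSpace ℝ (Fin d) → ℂ)
    (x : EuclideanSpace ℝ (Fin d)) :
    derivAlong (i :: l) f x = fderiv ℝ (derivAlong l f) x (EuclideanSpace.single i 1) := rfl

lemma contDiff_derivAlong {f : EuclideanSpace ℝ (Fin d) → ℂ} (hf : ContDiff ℝ (⊤ : ℕ∞) f)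
    (l : List (Fin d)) : ContDiff ℝ (⊤ : ℕ∞) (derivAlong l f) := by
  induction l with
  | nil => exact hf
  | cons i l ih =>
    have h1 : ContDiff ℝ (⊤ : ℕ∞) (fderiv ℝ (derivAlong l f)) :=
      ih.fderiv_right (m := (⊤ : ℕ∞)) (by norm_cast)
    exact h1.clm_apply contDiff_const

lemma differentiable_derivAlong {f : EuclideanSpace ℝ (Fin d) → ℂ}
    (hf : ContDiff ℝ (⊤ : ℕ∞) f) (l : List (Fin d)) : Differentiable ℝ (derivAlong l f) :=
  (contDiff_derivAlong hf l).differentiable (by simp)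

lemma derivAlong_append (l₁ l₂ : List (Fin d)) (f : EuclideanSpace ℝ (Fin d) → ℂ) :
    derivAlong (l₁ ++ l₂) f = derivAlong l₁ (derivAlong l₂ f) := by
  induction l₁ with
  | nil => rfl
  | cons i l ih => simp only [List.cons_append, derivAlong, ih]

/-- Schwarz's theorem: mixed partial derivatives of a smooth function commute. -/
lemma derivAlong_perm {f : EuclideanSpace ℝ (Fin d) → ℂ} (hf : ContDiff ℝ (⊤ : ℕ∞) f)
    {l₁ l₂ : List (Fin d)} (h : l₁.Perm l₂) : derivAlong l₁ f = derivAlong l₂ f := by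
  induction h with
  | nil => rfl
  | cons i _ ih => simp only [derivAlong, ih]
  | swap i j l =>
    funext x
    have hg := contDiff_derivAlong hf l
    have hd : Differentiable ℝ (fderiv ℝ (derivAlong l f)) :=
      (hg.fderiv_right (m := (⊤ : ℕ∞)) (by norm_cast)).differentiable (by simp)
    have hs : IsSymmSndFDerivAt ℝ (derivAlong l f) x :=
      hg.contDiffAt.isSymmSndFDerivAt (by simp; exact WithTop.coe_le_coe.2 (le_top : (2 : ℕ∞) ≤ ⊤))
    simp only [derivAlong]
    rw [fderiv_clm_apply (hd x) (differentiableAt_const _),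
      fderiv_clm_apply (hd x) (differentiableAt_const _)]
    simpa using hs _ _
  | trans _ _ h1 h2 => rw [h1, h2]

lemma count_canonical (α : Fin d → ℕ) (i : Fin d) :
    ((List.finRange d).flatMap fun i => List.replicate (α i) i).count i = α i := by
  rw [List.count_flatMap]
  have : (List.count i ∘ fun i => List.replicate (α i) i) = fun j => if j = i then α i else 0 := by
    funext j
    by_cases h : j = i
    · subst h; simp
    · simp [List.count_replicate, h]
  rw [this, ← List.ofFn_eq_map, List.sum_ofFn]
  simp

lemma length_canonical (α : Fin d → ℕ) :
    ((List.finRange d).flatMap fun i => List.replicate (α i) i).length = ∑ i, α i := by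
  rw [List.length_flatMap, ← List.ofFn_eq_map, List.sum_ofFn]
  simp

/-- Every list of directions is a rearrangement of the canonical list of a multi-index. -/
lemma exists_mderiv_eq {f : EuclideanSpace ℝ (Fin d) → ℂ} (hf : ContDiff ℝ (⊤ : ℕ∞) f)
    (l : List (Fin d)) : ∃ α : Fin d → ℕ, ∑ i, α i = l.length ∧ mderiv α f = derivAlong l f := by
  have hp : ((List.finRange d).flatMap fun i => List.replicate (l.count i) i).Perm l :=
    List.perm_iff_count.2 fun i => count_canonical _ i
  exact ⟨fun i => l.count i, by rw [← hp.length_eq, length_canonical], derivAlong_perm hf hp⟩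

/-- The multi-index norm controls the derivatives along all lists, by symmetry of mixed partials. -/
lemma Bnorm_le_iff {Mp : ℕ → ℝ} (hM : ∀ p, 0 < Mp p) {h : ℝ} (hh : 0 < h)
    {v : EuclideanSpace ℝ (Fin d) → ℝ}
    {f : EuclideanSpace ℝ (Fin d) → ℂ} (hf : ContDiff ℝ (⊤ : ℕ∞) f) {K : ℝ} (hK : 0 ≤ K) :
    Bnorm Mp h v f ≤ ENNReal.ofReal K ↔
      ∀ (l : List (Fin d)) x, ‖derivAlong l f x‖ * v x ≤ K * h⁻¹ ^ l.length * Mp l.length := by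
  have key : ∀ (n : ℕ) (z : ℂ) (c : ℝ), h ^ n * ‖z‖ * c / Mp n ≤ K ↔
      ‖z‖ * c ≤ K * h⁻¹ ^ n * Mp n := by
    intro n z c
    have := hM n
    have h2 : 0 < h ^ n := by positivity
    rw [div_le_iff₀ this, inv_pow, mul_assoc, mul_comm (h ^ n), ← le_div_iff₀ h2]
    have : K * Mp n / h ^ n = K * (h ^ n)⁻¹ * Mp n := by field_simp
    rw [this]
  simp only [Bnorm, iSup_le_iff, ENNReal.ofReal_le_ofReal_iff hK, key]
  constructor
  · intro H l x
    obtain ⟨α, h1, h2⟩ := exists_mderiv_eq hf l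
    have := H α x
    rwa [h1, h2] at this
  · intro H α x
    have := H ((List.finRange d).flatMap fun i => List.replicate (α i) i) x
    rwa [length_canonical] at this

lemma Bnorm_lt_top {Mp : ℕ → ℝ} (hM : ∀ p, 0 < Mp p) {h : ℝ} (hh : 0 < h)
    {v : EuclideanSpace ℝ (Fin d) → ℝ}
    {f : EuclideanSpace ℝ (Fin d) → ℂ} (hf : ContDiff ℝ (⊤ : ℕ∞) f) :
    Bnorm Mp h v f < ⊤ ↔ ∃ K, 0 ≤ K ∧
      ∀ (l : List (Fin d)) x, ‖derivAlong l f x‖ * v x ≤ K * h⁻¹ ^ l.length * Mp l.length := by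
  constructor
  · intro H
    refine ⟨(Bnorm Mp h v f).toReal, ENNReal.toReal_nonneg,
      (Bnorm_le_iff hM hh hf ENNReal.toReal_nonneg).1 ?_⟩
    rw [ENNReal.ofReal_toReal H.ne]
  · rintro ⟨K, hK, H⟩
    exact ((Bnorm_le_iff hM hh hf hK).2 H).trans_lt ENNReal.ofReal_lt_top

/-! ### Leibniz rule and elementary operations -/

/-- All ways of distributing the entries of a list over two sublists; these index the terms of the
Leibniz rule for `derivAlong`. -/
def listSplits {ι : Type*} : List ι → List (List ι × List ι)
  | [] => [([], [])]
  | (i :: l) => (listSplits l).map (fun p => (i :: p.1, p.2)) ++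
      (listSplits l).map (fun p => (p.1, i :: p.2))

lemma length_of_mem_listSplits {ι : Type*} (l : List ι) :
    ∀ p ∈ listSplits l, p.1.length + p.2.length = l.length := by
  induction l with
  | nil => simp [listSplits]
  | cons i l ih =>
    intro p hp
    simp only [listSplits, List.mem_append, List.mem_map] at hp
    rcases hp with ⟨q, hq, rfl⟩ | ⟨q, hq, rfl⟩ <;> have := ih q hq <;> simp <;> omega

/-- The binomial theorem, summed over `listSplits`. -/
lemma sum_listSplits_pow {ι : Type*} (a b : ℝ) (l : List ι) :
    ((listSplits l).map fun p => a ^ p.1.length * b ^ p.2.length).sum = (a + b) ^ l.length := by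
  induction l with
  | nil => simp [listSplits]
  | cons i l ih =>
    have h1 : ∀ L : List (List ι × List ι),
        (L.map fun p => a ^ (p.1.length + 1) * b ^ p.2.length).sum =
        a * (L.map fun p => a ^ p.1.length * b ^ p.2.length).sum := by
      intro L
      rw [← List.sum_map_mul_left]
      congr 1; apply List.map_congr_left; intro p _; ring
    have h2 : ∀ L : List (List ι × List ι),
        (L.map fun p => a ^ p.1.length * b ^ (p.2.length + 1)).sum =
        b * (L.map fun p => a ^ p.1.length * b ^ p.2.length).sum := by
      intro L
      rw [← List.sum_map_mul_left]
      congr 1; apply List.map_congr_left; intro p _; ring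
    simp only [listSplits, List.map_append, List.map_map, List.sum_append, List.length_cons,
      Function.comp_def]
    rw [h1, h2, ih]; ring

lemma hasFDerivAt_listSum {ι : Type*} (L : List ι) (F : ι → EuclideanSpace ℝ (Fin d) → ℂ)
    (F' : ι → EuclideanSpace ℝ (Fin d) →L[ℝ] ℂ) (x : EuclideanSpace ℝ (Fin d))
    (h : ∀ i ∈ L, HasFDerivAt (F i) (F' i) x) :
    HasFDerivAt (fun y => (L.map fun i => F i y).sum) ((L.map F').sum) x := by
  induction L with
  | nil => simpa using hasFDerivAt_const (0 : ℂ) x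
  | cons i L ih =>
    simp only [List.map_cons, List.sum_cons]
    exact (h i (by simp)).add (ih fun j hj => h j (by simp [hj]))

lemma listSum_clm_apply {ι : Type*} (L : List ι)
    (F' : ι → EuclideanSpace ℝ (Fin d) →L[ℝ] ℂ) (y : EuclideanSpace ℝ (Fin d)) :
    (L.map F').sum y = (L.map fun i => F' i y).sum := by
  induction L with
  | nil => simp
  | cons i L ih => simp [ih]

lemma derivAlong_mul {f g : EuclideanSpace ℝ (Fin d) → ℂ} (hf : ContDiff ℝ (⊤ : ℕ∞) f)
    (hg : ContDiff ℝ (⊤ : ℕ∞) g) (l : List (Fin d)) :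
    derivAlong l (fun x => f x * g x) = fun x =>
      ((listSplits l).map fun p => derivAlong p.1 f x * derivAlong p.2 g x).sum := by
  induction l with
  | nil => funext x; simp [listSplits, derivAlong]
  | cons i l ih =>
    funext x
    have := hasFDerivAt_listSum (listSplits l)
      (fun p y => derivAlong p.1 f y * derivAlong p.2 g y) _ x
      (fun p _ => ((differentiable_derivAlong hf p.1 x).hasFDerivAt.mul
        (differentiable_derivAlong hg p.2 x).hasFDerivAt))
    rw [derivAlong_cons_apply, ih, this.fderiv, listSum_clm_apply]
    simp only [listSplits, List.map_append, List.map_map, List.sum_append, Function.comp_def,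
      derivAlong]
    rw [← List.sum_map_add]
    congr 1; apply List.map_congr_left; intro p _
    simp; ring

lemma derivAlong_sub {f g : EuclideanSpace ℝ (Fin d) → ℂ} (hf : ContDiff ℝ (⊤ : ℕ∞) f)
    (hg : ContDiff ℝ (⊤ : ℕ∞) g) (l : List (Fin d)) :
    derivAlong l (fun x => f x - g x) = fun x => derivAlong l f x - derivAlong l g x := by
  induction l with
  | nil => rfl
  | cons i l ih =>
    funext x
    rw [derivAlong_cons_apply, ih, fderiv_fun_sub (differentiable_derivAlong hf l x)
      (differentiable_derivAlong hg l x)]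
    rfl

lemma derivAlong_const_mul {f : EuclideanSpace ℝ (Fin d) → ℂ} (hf : ContDiff ℝ (⊤ : ℕ∞) f)
    (c : ℂ) (l : List (Fin d)) :
    derivAlong l (fun x => c * f x) = fun x => c * derivAlong l f x := by
  induction l with
  | nil => rfl
  | cons i l ih =>
    funext x
    rw [derivAlong_cons_apply, ih, fderiv_const_mul (differentiable_derivAlong hf l x)]
    rfl

lemma derivAlong_const (c : ℂ) (i : Fin d) (l : List (Fin d)) :
    derivAlong (i :: l) (fun _ => c) = fun _ => 0 := by
  induction l generalizing i with
  | nil => funext x; simp [derivAlong]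
  | cons j l ih => funext x; rw [derivAlong_cons_apply, ih]; simp

lemma derivAlong_comp_add (f : EuclideanSpace ℝ (Fin d) → ℂ) (a : EuclideanSpace ℝ (Fin d))
    (l : List (Fin d)) :
    derivAlong l (fun x => f (x + a)) = fun x => derivAlong l f (x + a) := by
  induction l with
  | nil => rfl
  | cons i l ih => funext x; rw [derivAlong_cons_apply, ih, fderiv_comp_add_right]; rfl

lemma derivAlong_comp_smul {f : EuclideanSpace ℝ (Fin d) → ℂ} (hf : ContDiff ℝ (⊤ : ℕ∞) f)
    (c : ℝ) (l : List (Fin d)) :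
    derivAlong l (fun x => f (c • x)) = fun x => (c : ℂ) ^ l.length * derivAlong l f (c • x) := by
  induction l with
  | nil => funext x; simp [derivAlong]
  | cons i l ih =>
    funext x
    have h1 : HasFDerivAt (fun y : EuclideanSpace ℝ (Fin d) => c • y)
      (c • ContinuousLinearMap.id ℝ _) x := (hasFDerivAt_id x).const_smul c
    have h2 := ((differentiable_derivAlong hf l (c • x)).hasFDerivAt.comp x h1).const_mul
      ((c : ℂ) ^ l.length)
    rw [derivAlong_cons_apply, ih]
    refine (congrArg (fun L => L (EuclideanSpace.single i 1)) h2.fderiv).trans ?_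
    simp [derivAlong]; ring

lemma derivAlong_conj {f : EuclideanSpace ℝ (Fin d) → ℂ} (hf : ContDiff ℝ (⊤ : ℕ∞) f)
    (l : List (Fin d)) :
    derivAlong l (fun x => Complex.conjCLE (f x)) =
      fun x => Complex.conjCLE (derivAlong l f x) := by
  induction l with
  | nil => rfl
  | cons i l ih =>
    funext x
    have h2 := (Complex.conjCLE.toContinuousLinearMap.hasFDerivAt).comp x
      (differentiable_derivAlong hf l x).hasFDerivAt
    rw [derivAlong_cons_apply, ih]
    exact congrArg (fun L => L (EuclideanSpace.single i 1)) h2.fderiv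

lemma norm_listSum_le {ι : Type*} (L : List ι) (F : ι → ℂ) (G : ι → ℝ)
    (h : ∀ p ∈ L, ‖F p‖ ≤ G p) : ‖(L.map F).sum‖ ≤ (L.map G).sum := by
  induction L with
  | nil => simp
  | cons p L ih =>
    simp only [List.map_cons, List.sum_cons]
    exact (norm_add_le _ _).trans (add_le_add (h p (by simp)) (ih fun q hq => h q (by simp [hq])))

/-- Log-convexity makes `M_p M_q ≤ M_0 M_{p+q}`. -/
lemma CondM1.mul_le {Mp : ℕ → ℝ} (hM : ∀ p, 0 < Mp p) (h1 : CondM1 Mp) (p q : ℕ) :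
    Mp p * Mp q ≤ Mp 0 * Mp (p + q) := by
  have step : ∀ n, Mp (n + 1) / Mp n ≤ Mp (n + 2) / Mp (n + 1) := by
    intro n
    rw [div_le_div_iff₀ (hM _) (hM _)]
    have := h1 (n + 1) (by omega)
    simp only [Nat.add_sub_cancel] at this
    nlinarith
  have mono : Monotone fun n => Mp (n + 1) / Mp n := monotone_nat_of_le_succ step
  induction q with
  | zero => simp [mul_comm]
  | succ q ih =>
    have h := mono (show q ≤ p + q by omega)
    simp only at h
    rw [div_le_iff₀ (hM _)] at h
    have e : Mp (p + (q + 1)) = Mp (p + q + 1) / Mp (p + q) * Mp (p + q) := by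
      rw [div_mul_cancel₀ _ (hM _).ne']; rfl
    have hr : 0 < Mp (p + q + 1) / Mp (p + q) := div_pos (hM _) (hM _)
    rw [e]
    calc Mp p * Mp (q + 1) ≤ Mp p * (Mp (p + q + 1) / Mp (p + q) * Mp q) :=
          mul_le_mul_of_nonneg_left h (hM p).le
      _ = Mp (p + q + 1) / Mp (p + q) * (Mp p * Mp q) := by ring
      _ ≤ Mp (p + q + 1) / Mp (p + q) * (Mp 0 * Mp (p + q)) :=
          mul_le_mul_of_nonneg_left ih hr.le
      _ = _ := by ring

/-- Pointwise product estimate: geometric factors `a` and `b` add up under multiplication. -/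
lemma norm_derivAlong_mul_le {Mp : ℕ → ℝ} (hM : ∀ p, 0 < Mp p) (h1 : CondM1 Mp)
    {f g : EuclideanSpace ℝ (Fin d) → ℂ} (hf : ContDiff ℝ (⊤ : ℕ∞) f)
    (hg : ContDiff ℝ (⊤ : ℕ∞) g) {x : EuclideanSpace ℝ (Fin d)} {F G a b : ℝ}
    (hF : 0 ≤ F) (hG : 0 ≤ G) (ha : 0 ≤ a) (hb : 0 ≤ b)
    (bf : ∀ l, ‖derivAlong l f x‖ ≤ F * a ^ l.length * Mp l.length)
    (bg : ∀ l, ‖derivAlong l g x‖ ≤ G * b ^ l.length * Mp l.length) (l : List (Fin d)) :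
    ‖derivAlong l (fun x => f x * g x) x‖ ≤
      F * G * Mp 0 * (a + b) ^ l.length * Mp l.length := by
  rw [derivAlong_mul hf hg]
  refine (norm_listSum_le _ _
    (fun p => (F * G * Mp 0 * Mp l.length) * (a ^ p.1.length * b ^ p.2.length)) ?_).trans ?_
  · intro p hp
    have hl := length_of_mem_listSplits l p hp
    have hm := h1.mul_le hM p.1.length p.2.length
    rw [hl] at hm
    have := hM p.1.length
    rw [norm_mul]
    calc _ ≤ (F * a ^ p.1.length * Mp p.1.length) * (G * b ^ p.2.length * Mp p.2.length) :=
          mul_le_mul (bf _) (bg _) (norm_nonneg _) (by positivity)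
      _ = (F * G * (a ^ p.1.length * b ^ p.2.length)) * (Mp p.1.length * Mp p.2.length) := by ring
      _ ≤ (F * G * (a ^ p.1.length * b ^ p.2.length)) * (Mp 0 * Mp l.length) :=
          mul_le_mul_of_nonneg_left hm (by positivity)
      _ = _ := by ring
  · rw [List.sum_map_mul_left, sum_listSplits_pow]
    apply le_of_eq; ring

/-- A function all of whose iterated partial derivatives are differentiable is smooth. -/
lemma contDiff_of_derivAlong (f : EuclideanSpace ℝ (Fin d) → ℂ)
    (hf : ∀ l, Differentiable ℝ (derivAlong l f)) : ContDiff ℝ (⊤ : ℕ∞) f := by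
  rw [contDiff_infty]
  intro n
  induction n generalizing f with
  | zero => exact contDiff_zero.2 (hf []).continuous
  | succ n ih =>
    rw [Nat.cast_succ, contDiff_succ_iff_fderiv_apply]
    refine ⟨hf [], by simp, fun y => ?_⟩
    have hi : ∀ i, ContDiff ℝ n (derivAlong [i] f) := fun i =>
      ih _ fun l => by rw [← derivAlong_append]; exact hf _
    have : (fun x => fderiv ℝ f x y) = fun x => ∑ i, (y i : ℂ) * derivAlong [i] f x := by
      funext x
      conv_lhs => rw [← (EuclideanSpace.basisFun (Fin d) ℝ).sum_repr y]
      simp [derivAlong]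
    rw [this]
    exact ContDiff.sum fun i _ => contDiff_const.mul (hi i)

lemma norm_fderiv_le_of_partials (f : EuclideanSpace ℝ (Fin d) → ℂ) (x : EuclideanSpace ℝ (Fin d))
    {B : ℝ} (hB : 0 ≤ B) (h : ∀ i, ‖fderiv ℝ f x (EuclideanSpace.single i 1)‖ ≤ B) :
    ‖fderiv ℝ f x‖ ≤ d * B := by
  refine ContinuousLinearMap.opNorm_le_bound _ (by positivity) fun y => ?_
  conv_lhs => rw [← (EuclideanSpace.basisFun (Fin d) ℝ).sum_repr y]
  rw [map_sum]
  refine (norm_sum_le _ _).trans ?_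
  have : ∀ i ∈ Finset.univ, ‖fderiv ℝ f x ((EuclideanSpace.basisFun (Fin d) ℝ).repr y i •
      (EuclideanSpace.basisFun (Fin d) ℝ) i)‖ ≤ ‖y‖ * B := by
    intro i _
    rw [map_smul, norm_smul]
    refine mul_le_mul ?_ (by simpa using h i) (norm_nonneg _) (norm_nonneg _)
    simpa using PiLp.norm_apply_le y i
  refine (Finset.sum_le_card_nsmul _ _ _ this).trans (le_of_eq ?_)
  simp; ring

end DerivAlong

/-! ### The weight `exp (A(t))` -/

section Weight

variable {Ap : ℕ → ℝ}

/-- `t^p / A_p` is bounded in `p` because `A_{p+1}/A_p → ∞`. -/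
lemma bddAbove_assoc (hA : IsWeightSeq Ap) {t : ℝ} (ht : 0 < t) :
    ∃ B : ℝ, ∀ p, t ^ p * Ap 0 / Ap p ≤ B := by
  obtain ⟨hpos, hlim⟩ := hA
  obtain ⟨N, hN⟩ := (hlim.eventually_ge_atTop t).exists_forall_of_atTop
  have hdec : ∀ n, t ^ (N + n) * Ap 0 / Ap (N + n) ≤ t ^ N * Ap 0 / Ap N := by
    intro n
    induction n with
    | zero => simp
    | succ n ih =>
      refine le_trans ?_ ih
      have h1 := hN (N + n) (by omega)
      rw [le_div_iff₀ (hpos _)] at h1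
      rw [div_le_div_iff₀ (hpos _) (hpos _)]
      have h0 := hpos 0
      have : 0 ≤ t ^ (N + n) * Ap 0 := by positivity
      calc t ^ (N + (n + 1)) * Ap 0 * Ap (N + n) = t ^ (N + n) * Ap 0 * (t * Ap (N + n)) := by ring
        _ ≤ t ^ (N + n) * Ap 0 * Ap (N + n + 1) := mul_le_mul_of_nonneg_left h1 this
  refine ⟨∑ p ∈ Finset.range (N + 1), t ^ p * Ap 0 / Ap p, fun p => ?_⟩
  have hnn : ∀ i ∈ Finset.range (N + 1), 0 ≤ t ^ i * Ap 0 / Ap i := fun i _ => by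
    have := hpos i; have := hpos 0; positivity
  rcases le_total p N with h | h
  · exact Finset.single_le_sum (f := fun p => t ^ p * Ap 0 / Ap p) hnn
      (Finset.mem_range.2 (by omega))
  · obtain ⟨n, rfl⟩ := Nat.exists_eq_add_of_le h
    exact (hdec n).trans (Finset.single_le_sum (f := fun p => t ^ p * Ap 0 / Ap p) hnn
      (Finset.mem_range.2 (by omega)))

lemma le_exp_assocFn (hA : IsWeightSeq Ap) {t : ℝ} (ht : 0 ≤ t) (p : ℕ) :
    t ^ p * Ap 0 / Ap p ≤ Real.exp (assocFn Ap t) := by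
  rcases ht.eq_or_lt with rfl | ht
  · rcases p with _ | p
    · simp [assocFn, (hA.1 0).ne']
    · simp [assocFn]
  · have := hA.1 p
    have := hA.1 0
    rw [assocFn, if_neg ht.ne', ← Real.log_le_iff_le_exp (by positivity)]
    obtain ⟨B, hB⟩ := bddAbove_assoc hA ht
    refine le_ciSup (f := fun p => Real.log (t ^ p * Ap 0 / Ap p)) ⟨Real.log B, ?_⟩ p
    rintro _ ⟨q, rfl⟩
    have := hA.1 q
    exact Real.log_le_log (by positivity) (hB q)

lemma exp_assocFn_le (hA : IsWeightSeq Ap) {t B : ℝ} (ht : 0 ≤ t)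
    (h : ∀ p, t ^ p * Ap 0 / Ap p ≤ B) : Real.exp (assocFn Ap t) ≤ B := by
  have hB : 1 ≤ B := by simpa [(hA.1 0).ne'] using h 0
  rcases ht.eq_or_lt with rfl | ht
  · simpa [assocFn] using hB
  · rw [assocFn, if_neg ht.ne', ← Real.le_log_iff_exp_le (by linarith)]
    refine ciSup_le fun p => ?_
    have := hA.1 p
    have := hA.1 0
    exact Real.log_le_log (by positivity) (h p)

lemma one_le_exp_assocFn (hA : IsWeightSeq Ap) {t : ℝ} (ht : 0 ≤ t) :
    1 ≤ Real.exp (assocFn Ap t) := by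
  simpa [(hA.1 0).ne'] using le_exp_assocFn hA ht 0

lemma exp_assocFn_mono (hA : IsWeightSeq Ap) {s t : ℝ} (hs : 0 ≤ s) (hst : s ≤ t) :
    Real.exp (assocFn Ap s) ≤ Real.exp (assocFn Ap t) :=
  exp_assocFn_le hA hs fun p => le_trans (by
    have := hA.1 p
    have := hA.1 0
    gcongr) (le_exp_assocFn hA (hs.trans hst) p)

lemma exp_assocFn_add_le (hA : IsWeightSeq Ap) {s t : ℝ} (hs : 0 ≤ s) (ht : 0 ≤ t) :
    Real.exp (assocFn Ap (s + t)) ≤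
      Real.exp (assocFn Ap (2 * s)) * Real.exp (assocFn Ap (2 * t)) := by
  have h1 := one_le_exp_assocFn hA (show 0 ≤ 2 * s by linarith)
  have h2 := one_le_exp_assocFn hA (show 0 ≤ 2 * t by linarith)
  rcases le_total s t with h | h
  · have := exp_assocFn_mono hA (add_nonneg hs ht) (show s + t ≤ 2 * t by linarith)
    nlinarith
  · have := exp_assocFn_mono hA (add_nonneg hs ht) (show s + t ≤ 2 * s by linarith)
    nlinarith

/-- The triangle inequality in the form used for translations and convolutions. -/
lemma exp_assocFn_norm_le {V : Type*} [SeminormedAddCommGroup V] (hA : IsWeightSeq Ap) {μ : ℝ}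
    (hμ : 0 ≤ μ) (x y : V) : Real.exp (assocFn Ap (μ * ‖x‖)) ≤
      Real.exp (assocFn Ap ((2 * μ) * ‖x - y‖)) * Real.exp (assocFn Ap ((2 * μ) * ‖y‖)) := by
  have h1 : μ * ‖x‖ ≤ μ * ‖x - y‖ + μ * ‖y‖ := by
    rw [← mul_add]
    refine mul_le_mul_of_nonneg_left ?_ hμ
    simpa using norm_add_le (x - y) y
  refine (exp_assocFn_mono hA (by positivity) h1).trans ?_
  have := exp_assocFn_add_le hA (s := μ * ‖x - y‖) (t := μ * ‖y‖) (by positivity) (by positivity)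
  simpa [mul_assoc] using this

/-- Under (M.2), the square of the weight is dominated by a dilate of the weight. -/
lemma exp_assocFn_mul_self_le (hA : IsWeightSeq Ap) {C₀ H : ℝ} (hC : 0 ≤ C₀) (hH : 0 ≤ H)
    (h2 : CondM2 Ap C₀ H) {t : ℝ} (ht : 0 ≤ t) :
    Real.exp (assocFn Ap t) * Real.exp (assocFn Ap t) ≤
      C₀ * Ap 0 * Real.exp (assocFn Ap (H * t)) := by
  have h0 := hA.1 0
  have key : ∀ p q, (t ^ p * Ap 0 / Ap p) * (t ^ q * Ap 0 / Ap q) ≤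
      C₀ * Ap 0 * Real.exp (assocFn Ap (H * t)) := by
    intro p q
    have hp := hA.1 p
    have hq := hA.1 q
    have hpq := hA.1 (p + q)
    have e := le_exp_assocFn hA (mul_nonneg hH ht) (p + q)
    refine le_trans ?_ (mul_le_mul_of_nonneg_left e (by positivity))
    rw [div_mul_div_comm, mul_div_assoc', div_le_div_iff₀ (by positivity) hpq]
    have := mul_le_mul_of_nonneg_left (h2 p q) (show 0 ≤ t ^ (p + q) * Ap 0 * Ap 0 by positivity)
    calc _ = t ^ (p + q) * Ap 0 * Ap 0 * Ap (p + q) := by ring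
      _ ≤ _ := this
      _ = _ := by rw [mul_pow]; ring
  have pos := Real.exp_pos (assocFn Ap t)
  rw [← le_div_iff₀ pos]
  refine exp_assocFn_le hA ht fun p => ?_
  rw [le_div_iff₀ pos, mul_comm]
  have hp := hA.1 p
  rcases (show 0 ≤ t ^ p * Ap 0 / Ap p by positivity).eq_or_lt with h | h
  · rw [← h, mul_zero]; positivity
  · rw [← le_div_iff₀ h]
    refine exp_assocFn_le hA ht fun q => ?_
    rw [le_div_iff₀ h, mul_comm]
    exact key p q

lemma one_add_pow_le (hA : IsWeightSeq Ap) {μ : ℝ} (hμ : 0 < μ) (m : ℕ) :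
    ∃ K : ℝ, 0 < K ∧ ∀ t : ℝ, 0 ≤ t → (1 + t) ^ m ≤ K * Real.exp (assocFn Ap (μ * t)) := by
  have h0 := hA.1 0
  have hm := hA.1 m
  refine ⟨2 ^ m * (1 + Ap m / (Ap 0 * μ ^ m)), by positivity, fun t ht => ?_⟩
  have h1 := one_le_exp_assocFn hA (mul_nonneg hμ.le ht)
  have h2 := le_exp_assocFn hA (mul_nonneg hμ.le ht) m
  have h3 : t ^ m ≤ Ap m / (Ap 0 * μ ^ m) * Real.exp (assocFn Ap (μ * t)) := by
    refine le_trans (le_of_eq ?_) (mul_le_mul_of_nonneg_left h2 (by positivity))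
    rw [mul_pow]; field_simp
  have h4 : (1 + t) ^ m ≤ 2 ^ m * (1 + t ^ m) := by
    rcases le_total t 1 with h | h
    · calc (1 + t) ^ m ≤ 2 ^ m := pow_le_pow_left₀ (by linarith) (by linarith) m
        _ ≤ _ := le_mul_of_one_le_right (by positivity) (by linarith [pow_nonneg ht m])
    · calc (1 + t) ^ m ≤ (2 * t) ^ m := pow_le_pow_left₀ (by linarith) (by linarith) m
        _ = 2 ^ m * t ^ m := mul_pow _ _ _
        _ ≤ _ := mul_le_mul_of_nonneg_left (by linarith) (by positivity)
  refine h4.trans ?_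
  rw [mul_assoc]
  refine mul_le_mul_of_nonneg_left ?_ (by positivity)
  linarith

end Weight

/-! ### Convolution with an integrable kernel -/

section Conv

variable {d : ℕ}

lemma integrable_conv {f K : EuclideanSpace ℝ (Fin d) → ℂ} (hf : Continuous f) {B : ℝ}
    (hB : ∀ x, ‖f x‖ ≤ B) (hK : Integrable K) (x : EuclideanSpace ℝ (Fin d)) :
    Integrable fun y => f (x - y) * K y :=
  hK.bdd_mul (by fun_prop) (Eventually.of_forall fun y => hB _)

lemma hasFDerivAt_conv {f K : EuclideanSpace ℝ (Fin d) → ℂ} (hf : ContDiff ℝ (⊤ : ℕ∞) f) {B B' : ℝ}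
    (hB : ∀ x, ‖f x‖ ≤ B) (hB' : ∀ x, ‖fderiv ℝ f x‖ ≤ B') (hK : Integrable K)
    (x : EuclideanSpace ℝ (Fin d)) :
    HasFDerivAt (fun x => ∫ y, f (x - y) * K y) (∫ y, K y • fderiv ℝ f (x - y)) x := by
  have hc : Continuous (fderiv ℝ f) := hf.continuous_fderiv (by simp)
  have hd : Differentiable ℝ f := hf.differentiable (by simp)
  refine hasFDerivAt_integral_of_dominated_of_fderiv_le
    (F := fun x y => f (x - y) * K y) (F' := fun x y => K y • fderiv ℝ f (x - y))
    (bound := fun y => ‖K y‖ * B') univ_mem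
    (Eventually.of_forall fun z => (integrable_conv hf.continuous hB hK z).aestronglyMeasurable)
    (integrable_conv hf.continuous hB hK x)
    (hK.aestronglyMeasurable.smul (by fun_prop)) (Eventually.of_forall fun y z _ => ?_)
    (hK.norm.mul_const _) (Eventually.of_forall fun y z _ => ?_)
  · rw [norm_smul]
    exact mul_le_mul_of_nonneg_left (hB' _) (norm_nonneg _)
  · have h1 : HasFDerivAt (fun z => f (z - y)) (fderiv ℝ f (z - y)) z := by
      have := (hd (z - y)).hasFDerivAt.comp z ((hasFDerivAt_id z).sub_const y)
      simpa [Function.comp_def] using this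
    exact h1.mul_const (K y)

/-- Derivatives of a convolution fall on the factor whose derivatives are all bounded. -/
lemma derivAlong_conv {f K : EuclideanSpace ℝ (Fin d) → ℂ} (hf : ContDiff ℝ (⊤ : ℕ∞) f)
    (hB : ∀ l, ∃ B, ∀ x, ‖derivAlong l f x‖ ≤ B) (hK : Integrable K) (l : List (Fin d)) :
    (derivAlong l (fun x => ∫ y, f (x - y) * K y) = fun x => ∫ y, derivAlong l f (x - y) * K y) ∧
    Differentiable ℝ (fun x => ∫ y, derivAlong l f (x - y) * K y) := by
  have hB1 : ∀ l, ∃ B, ∀ x, ‖fderiv ℝ (derivAlong l f) x‖ ≤ B := by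
    intro l
    choose b hb using hB
    refine ⟨d * ∑ i, |b (i :: l)|, fun x => norm_fderiv_le_of_partials _ _
      (Finset.sum_nonneg fun i _ => abs_nonneg _) fun i => ?_⟩
    exact (hb (i :: l) x).trans ((le_abs_self _).trans
      (Finset.single_le_sum (f := fun i => |b (i :: l)|) (fun i _ => abs_nonneg _)
        (Finset.mem_univ i)))
  have hder : ∀ l x, HasFDerivAt (fun x => ∫ y, derivAlong l f (x - y) * K y)
      (∫ y, K y • fderiv ℝ (derivAlong l f) (x - y)) x := by
    intro l x
    obtain ⟨B, h1⟩ := hB l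
    obtain ⟨B', h2⟩ := hB1 l
    exact hasFDerivAt_conv (contDiff_derivAlong hf l) h1 h2 hK x
  refine ⟨?_, fun x => (hder l x).differentiableAt⟩
  induction l with
  | nil => rfl
  | cons i l ih =>
    funext x
    rw [derivAlong_cons_apply, ih, (hder l x).fderiv]
    obtain ⟨B', h2⟩ := hB1 l
    have hc : Continuous (fderiv ℝ (derivAlong l f)) :=
      (contDiff_derivAlong hf l).continuous_fderiv (by simp)
    rw [ContinuousLinearMap.integral_apply]
    · simp [derivAlong_cons_apply, mul_comm]
    · exact hK.smul_bdd _ (by fun_prop) (Eventually.of_forall fun y => h2 _)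

lemma contDiff_conv {f K : EuclideanSpace ℝ (Fin d) → ℂ} (hf : ContDiff ℝ (⊤ : ℕ∞) f)
    (hB : ∀ l, ∃ B, ∀ x, ‖derivAlong l f x‖ ≤ B) (hK : Integrable K) :
    ContDiff ℝ (⊤ : ℕ∞) (fun x => ∫ y, f (x - y) * K y) :=
  contDiff_of_derivAlong _ fun l => by
    rw [(derivAlong_conv hf hB hK l).1]; exact (derivAlong_conv hf hB hK l).2

lemma conv_comm (f K : EuclideanSpace ℝ (Fin d) → ℂ) (x : EuclideanSpace ℝ (Fin d)) :
    ∫ y, f (x - y) * K y = ∫ y, K (x - y) * f y := by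
  rw [← integral_sub_left_eq_self _ volume x]
  simp [mul_comm]

/-- Substitution `y ↦ c y` in a convolution against the dilated kernel `c^{-d} K(c^{-1} ·)`. -/
lemma conv_dilate (f K : EuclideanSpace ℝ (Fin d) → ℂ) {c : ℝ} (hc : 0 < c)
    (x : EuclideanSpace ℝ (Fin d)) :
    ∫ y, f (x - y) * (((c ^ d)⁻¹ : ℝ) * K (c⁻¹ • y)) = ∫ y, f (x - c • y) * K y := by
  have := Measure.integral_comp_smul (volume : Measure (EuclideanSpace ℝ (Fin d)))
    (fun y => f (x - c • y) * K y) c⁻¹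
  simp only [smul_inv_smul₀ hc.ne', finrank_euclideanSpace, Fintype.card_fin, inv_pow, inv_inv] at this
  rw [abs_of_pos (by positivity)] at this
  have h2 : ∀ y, f (x - y) * (((c ^ d)⁻¹ : ℝ) * K (c⁻¹ • y)) =
      (((c ^ d)⁻¹ : ℝ) : ℂ) * (f (x - y) * K (c⁻¹ • y)) := fun y => by ring
  simp_rw [h2]
  rw [integral_const_mul, this, Complex.real_smul, ← mul_assoc, ← Complex.ofReal_mul,
    inv_mul_cancel₀ (by positivity)]
  simp

/-- The integrable majorant used for all integral estimates. -/
lemma integrable_decay : Integrable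
    (fun y : EuclideanSpace ℝ (Fin d) => ((1 + ‖y‖) ^ (d + 1))⁻¹) := by
  have := integrable_one_add_norm (E := EuclideanSpace ℝ (Fin d)) (μ := volume) (r := (d + 1 : ℕ))
    (by simp)
  refine this.congr (Eventually.of_forall fun y => ?_)
  simp only
  rw [Real.rpow_neg (by positivity), Real.rpow_natCast]

end Conv

/-! ### The Gelfand-Shilov space -/

section GelfandShilov

variable {d : ℕ} {Mp Ap : ℕ → ℝ}

/-- Rapid decay with respect to all dilates of the weight `exp (A(x))`. -/
def RapidDecay (Ap : ℕ → ℝ) (g : EuclideanSpace ℝ (Fin d) → ℂ) : Prop :=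
  ∀ μ : ℝ, 0 < μ → ∃ K : ℝ, 0 ≤ K ∧ ∀ x, ‖g x‖ * Real.exp (assocFn Ap (μ * ‖x‖)) ≤ K

/-- Membership in the Gelfand-Shilov space, with derivatives along arbitrary lists and with
independent parameters for regularity and decay. -/
lemma memGS_iff (hM : ∀ p, 0 < Mp p) (hA : IsWeightSeq Ap)
    {f : EuclideanSpace ℝ (Fin d) → ℂ} (hf : ContDiff ℝ (⊤ : ℕ∞) f) :
    memGS Mp Ap f ↔ ∀ b : ℝ, 0 < b → ∀ μ : ℝ, 0 < μ → ∃ K : ℝ, 0 ≤ K ∧ ∀ (l : List (Fin d)) x,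
      ‖derivAlong l f x‖ * Real.exp (assocFn Ap (μ * ‖x‖)) ≤ K * b ^ l.length * Mp l.length := by
  constructor
  · rintro ⟨-, H⟩ b hb μ hμ
    have hh : 0 < max b⁻¹ μ := lt_max_of_lt_right hμ
    obtain ⟨K, hK, h⟩ := (Bnorm_lt_top hM hh hf).1 (H _ hh)
    refine ⟨K, hK, fun l x => ?_⟩
    have hp := hM l.length
    calc _ ≤ ‖derivAlong l f x‖ * Real.exp (assocFn Ap (max b⁻¹ μ * ‖x‖)) := by
          refine mul_le_mul_of_nonneg_left (exp_assocFn_mono hA (by positivity) ?_) (norm_nonneg _)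
          exact mul_le_mul_of_nonneg_right (le_max_right _ _) (norm_nonneg _)
      _ ≤ _ := h l x
      _ ≤ _ := by
          gcongr
          exact inv_le_of_inv_le₀ hb (le_max_left _ _)
  · intro H
    refine ⟨hf, fun h hh => (Bnorm_lt_top hM hh hf).2 ?_⟩
    exact H h⁻¹ (inv_pos.2 hh) h hh

lemma memGS.rapidDecay (hM : ∀ p, 0 < Mp p) (hA : IsWeightSeq Ap)
    {f : EuclideanSpace ℝ (Fin d) → ℂ} (hf : memGS Mp Ap f) (l : List (Fin d)) :
    RapidDecay Ap (derivAlong l f) := by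
  intro μ hμ
  obtain ⟨K, hK, h⟩ := (memGS_iff hM hA hf.1).1 hf 1 one_pos μ hμ
  have := hM l.length
  exact ⟨K * 1 ^ l.length * Mp l.length, by positivity, h l⟩

lemma RapidDecay.bounded (hA : IsWeightSeq Ap) {g : EuclideanSpace ℝ (Fin d) → ℂ}
    (hg : RapidDecay Ap g) : ∃ B, ∀ x, ‖g x‖ ≤ B := by
  obtain ⟨K, -, h⟩ := hg 1 one_pos
  exact ⟨K, fun x => (le_mul_of_one_le_right (norm_nonneg _)
    (one_le_exp_assocFn hA (by positivity))).trans (h x)⟩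

/-- Rapidly decreasing functions keep an integrable majorant when multiplied by
`(1 + ‖y‖) exp (A(μ y))`. -/
lemma RapidDecay.weighted (hA : IsWeightSeq Ap)
    (hA2 : ∃ C0' H' : ℝ, 1 ≤ C0' ∧ 1 ≤ H' ∧ CondM2 Ap C0' H') {g : EuclideanSpace ℝ (Fin d) → ℂ}
    (hg : RapidDecay Ap g) {μ : ℝ} (hμ : 0 < μ) : ∃ K : ℝ, 0 ≤ K ∧ ∀ y,
      (1 + ‖y‖) * Real.exp (assocFn Ap (μ * ‖y‖)) * ‖g y‖ ≤ K * ((1 + ‖y‖) ^ (d + 1))⁻¹ := by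
  obtain ⟨C', H', hC', hH', h2⟩ := hA2
  obtain ⟨K1, hK1, h1⟩ := one_add_pow_le hA hμ (d + 2)
  obtain ⟨K, hK, h⟩ := hg (H' * μ) (by positivity)
  have h0 := hA.1 0
  refine ⟨K1 * (C' * Ap 0) * K, by positivity, fun y => ?_⟩
  rw [← div_eq_mul_inv, le_div_iff₀ (by positivity)]
  have e2 := exp_assocFn_mul_self_le hA (by linarith) (by linarith) h2
    (show 0 ≤ μ * ‖y‖ by positivity)
  have e1 := h1 ‖y‖ (norm_nonneg _)
  have e3 := h y
  rw [mul_assoc] at e3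
  set E := Real.exp (assocFn Ap (μ * ‖y‖))
  have hE : 0 < E := Real.exp_pos _
  calc _ = (1 + ‖y‖) ^ (d + 2) * (E * ‖g y‖) := by ring
    _ ≤ K1 * E * (E * ‖g y‖) := mul_le_mul_of_nonneg_right e1 (by positivity)
    _ = K1 * ‖g y‖ * (E * E) := by ring
    _ ≤ K1 * ‖g y‖ * (C' * Ap 0 * Real.exp (assocFn Ap (H' * (μ * ‖y‖)))) :=
        mul_le_mul_of_nonneg_left e2 (by positivity)
    _ = K1 * (C' * Ap 0) * (‖g y‖ * Real.exp (assocFn Ap (H' * (μ * ‖y‖)))) := by ring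
    _ ≤ _ := mul_le_mul_of_nonneg_left e3 (by positivity)

lemma RapidDecay.integrable (hA : IsWeightSeq Ap)
    (hA2 : ∃ C0' H' : ℝ, 1 ≤ C0' ∧ 1 ≤ H' ∧ CondM2 Ap C0' H') {g : EuclideanSpace ℝ (Fin d) → ℂ}
    (hg : RapidDecay Ap g) (hc : Continuous g) : Integrable g := by
  obtain ⟨K, hK, h⟩ := hg.weighted hA hA2 one_pos
  refine (integrable_decay.const_mul K).mono' hc.aestronglyMeasurable
    (Eventually.of_forall fun y => le_trans ?_ (h y))
  refine le_mul_of_one_le_left (norm_nonneg _) ?_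
  have := one_le_exp_assocFn hA (show 0 ≤ 1 * ‖y‖ by positivity)
  nlinarith [norm_nonneg y]

lemma memGS.const_mul (hM : ∀ p, 0 < Mp p) (hA : IsWeightSeq Ap)
    {f : EuclideanSpace ℝ (Fin d) → ℂ} (hf : memGS Mp Ap f) (c : ℂ) :
    memGS Mp Ap fun x => c * f x := by
  refine (memGS_iff hM hA (contDiff_const.mul hf.1)).2 fun b hb μ hμ => ?_
  obtain ⟨K, hK, h⟩ := (memGS_iff hM hA hf.1).1 hf b hb μ hμ
  refine ⟨‖c‖ * K, by positivity, fun l x => ?_⟩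
  rw [derivAlong_const_mul hf.1, norm_mul]
  have := mul_le_mul_of_nonneg_left (h l x) (norm_nonneg c)
  linarith

lemma memGS.comp_smul (hM : ∀ p, 0 < Mp p) (hA : IsWeightSeq Ap)
    {f : EuclideanSpace ℝ (Fin d) → ℂ} (hf : memGS Mp Ap f) {c : ℝ} (hc : 0 < c) :
    memGS Mp Ap fun x => f (c • x) := by
  have hs : ContDiff ℝ (⊤ : ℕ∞) fun x => f (c • x) := hf.1.comp (contDiff_const_smul c)
  refine (memGS_iff hM hA hs).2 fun b hb μ hμ => ?_
  obtain ⟨K, hK, h⟩ := (memGS_iff hM hA hf.1).1 hf (b / c) (by positivity) (μ / c) (by positivity)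
  refine ⟨K, hK, fun l x => ?_⟩
  have e := h l (c • x)
  rw [norm_smul, Real.norm_of_nonneg hc.le, ← mul_assoc, div_mul_cancel₀ _ hc.ne', div_pow] at e
  rw [derivAlong_comp_smul hf.1, norm_mul, norm_pow, Complex.norm_real, Real.norm_of_nonneg hc.le,
    mul_assoc]
  refine (mul_le_mul_of_nonneg_left e (by positivity)).trans (le_of_eq ?_)
  field_simp

lemma memGS.comp_add (hM : ∀ p, 0 < Mp p) (hA : IsWeightSeq Ap)
    {f : EuclideanSpace ℝ (Fin d) → ℂ} (hf : memGS Mp Ap f) (a : EuclideanSpace ℝ (Fin d)) :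
    memGS Mp Ap fun x => f (x + a) := by
  have hs : ContDiff ℝ (⊤ : ℕ∞) fun x => f (x + a) := hf.1.comp (contDiff_id.add contDiff_const)
  refine (memGS_iff hM hA hs).2 fun b hb μ hμ => ?_
  obtain ⟨K, hK, h⟩ := (memGS_iff hM hA hf.1).1 hf b hb (2 * μ) (by positivity)
  refine ⟨K * Real.exp (assocFn Ap ((2 * μ) * ‖a‖)), by positivity, fun l x => ?_⟩
  rw [derivAlong_comp_add]
  have e := exp_assocFn_norm_le hA hμ.le x (-a)
  rw [sub_neg_eq_add, norm_neg] at e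
  refine (mul_le_mul_of_nonneg_left e (norm_nonneg _)).trans ?_
  rw [← mul_assoc]
  refine (mul_le_mul_of_nonneg_right (h l (x + a)) (Real.exp_pos _).le).trans (le_of_eq ?_)
  ring

lemma memGS.mul_conj (hM : ∀ p, 0 < Mp p) (h1 : CondM1 Mp) (hA : IsWeightSeq Ap)
    {f : EuclideanSpace ℝ (Fin d) → ℂ} (hf : memGS Mp Ap f) :
    memGS Mp Ap fun x => f x * Complex.conjCLE (f x) := by
  have hc : ContDiff ℝ (⊤ : ℕ∞) fun x => Complex.conjCLE (f x) :=
    Complex.conjCLE.contDiff.comp hf.1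
  refine (memGS_iff hM hA (hf.1.mul hc)).2 fun b hb μ hμ => ?_
  obtain ⟨K, hK, h⟩ := (memGS_iff hM hA hf.1).1 hf (b / 2) (by positivity) μ hμ
  have h0 := hM 0
  refine ⟨K * K * Mp 0, by positivity, fun l x => ?_⟩
  have hE : 0 < Real.exp (assocFn Ap (μ * ‖x‖)) := Real.exp_pos _
  have hE1 := one_le_exp_assocFn hA (show 0 ≤ μ * ‖x‖ by positivity)
  have e := norm_derivAlong_mul_le hM h1 hf.1 hc (x := x)
    (F := K / Real.exp (assocFn Ap (μ * ‖x‖))) (G := K) (a := b / 2) (b := b / 2)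
    (by positivity) hK (by positivity) (by positivity)
    (fun l => by
      rw [div_mul_eq_mul_div, div_mul_eq_mul_div, le_div_iff₀ hE]; exact h l x)
    (fun l => by
      rw [derivAlong_conj hf.1]
      simp only [Complex.conjCLE_apply, RCLike.norm_conj]
      exact (le_mul_of_one_le_right (norm_nonneg _) hE1).trans (h l x)) l
  rw [add_halves] at e
  refine (mul_le_mul_of_nonneg_right e hE.le).trans (le_of_eq ?_)
  field_simp

lemma exists_GS_one_at_zero (hM : ∀ p, 0 < Mp p) (hA : IsWeightSeq Ap)
    (hnt : ∃ φ : EuclideanSpace ℝ (Fin d) → ℂ, φ ≠ 0 ∧ memGS Mp Ap φ) :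
    ∃ θ : EuclideanSpace ℝ (Fin d) → ℂ, memGS Mp Ap θ ∧ θ 0 = 1 := by
  obtain ⟨φ, hne, hφ⟩ := hnt
  obtain ⟨x₀, hx₀⟩ := Function.ne_iff.1 hne
  refine ⟨fun x => (φ x₀)⁻¹ * φ (x + x₀), (hφ.comp_add hM hA x₀).const_mul hM hA _, ?_⟩
  simpa using inv_mul_cancel₀ hx₀

lemma exists_GS_integral_one (hM : ∀ p, 0 < Mp p) (h1 : CondM1 Mp) (hA : IsWeightSeq Ap)
    (hA2 : ∃ C0' H' : ℝ, 1 ≤ C0' ∧ 1 ≤ H' ∧ CondM2 Ap C0' H')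
    (hnt : ∃ φ : EuclideanSpace ℝ (Fin d) → ℂ, φ ≠ 0 ∧ memGS Mp Ap φ) :
    ∃ ψ : EuclideanSpace ℝ (Fin d) → ℂ, memGS Mp Ap ψ ∧ ∫ x, ψ x = 1 := by
  obtain ⟨φ, hne, hφ⟩ := hnt
  obtain ⟨x₀, hx₀⟩ := Function.ne_iff.1 hne
  have hm := hφ.mul_conj hM h1 hA
  have hintg : Integrable (fun x => φ x * Complex.conjCLE (φ x)) :=
    RapidDecay.integrable hA hA2 (hm.rapidDecay hM hA []) hm.1.continuous
  have heq : ∀ x, φ x * Complex.conjCLE (φ x) = ((Complex.normSq (φ x) : ℝ) : ℂ) := fun x => by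
    simp [Complex.mul_conj]
  have hintg' : Integrable (fun x => Complex.normSq (φ x)) := by
    simp_rw [heq] at hintg
    simpa using hintg.re
  have hpos : 0 < ∫ x, Complex.normSq (φ x) :=
    integral_pos_of_integrable_nonneg_nonzero (x := x₀)
      (Complex.continuous_normSq.comp hφ.1.continuous) hintg'
      (fun x => Complex.normSq_nonneg _) (by simpa using hx₀)
  have hI : ∫ x, φ x * Complex.conjCLE (φ x) ≠ 0 := by
    simp_rw [heq]
    rw [integral_complex_ofReal]
    exact_mod_cast hpos.ne'
  refine ⟨fun x => (∫ x, φ x * Complex.conjCLE (φ x))⁻¹ * (φ x * Complex.conjCLE (φ x)),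
    hm.const_mul hM hA _, ?_⟩
  rw [integral_const_mul, inv_mul_cancel₀ hI]

/-- Convolution of a rapidly decreasing function with an element of the Gelfand-Shilov space. -/
lemma memGS.conv (hM : ∀ p, 0 < Mp p) (hA : IsWeightSeq Ap)
    (hA2 : ∃ C0' H' : ℝ, 1 ≤ C0' ∧ 1 ≤ H' ∧ CondM2 Ap C0' H')
    {f g : EuclideanSpace ℝ (Fin d) → ℂ} (hf : memGS Mp Ap f) (hg : RapidDecay Ap g)
    (hgc : Continuous g) : memGS Mp Ap fun x => ∫ y, f (x - y) * g y := by
  have hB : ∀ l, ∃ B, ∀ x, ‖derivAlong l f x‖ ≤ B := fun l => (hf.rapidDecay hM hA l).bounded hA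
  have hgi := hg.integrable hA hA2 hgc
  refine (memGS_iff hM hA (contDiff_conv hf.1 hB hgi)).2 fun b hb μ hμ => ?_
  obtain ⟨K, hK, h⟩ := (memGS_iff hM hA hf.1).1 hf b hb (2 * μ) (by positivity)
  obtain ⟨K', hK', h'⟩ := hg.weighted hA hA2 (show 0 < 2 * μ by positivity)
  set I := ∫ y : EuclideanSpace ℝ (Fin d), ((1 + ‖y‖) ^ (d + 1))⁻¹ with hI
  have hI0 : 0 ≤ I := integral_nonneg fun y => by positivity
  refine ⟨K * K' * I, by positivity, fun l x => ?_⟩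
  have hp := hM l.length
  rw [(derivAlong_conv hf.1 hB hgi l).1]
  simp only
  have hE : 0 < Real.exp (assocFn Ap (μ * ‖x‖)) := Real.exp_pos _
  rw [← le_div_iff₀ hE]
  refine (norm_integral_le_of_norm_le (integrable_decay.const_mul
    (K * b ^ l.length * Mp l.length * K' / Real.exp (assocFn Ap (μ * ‖x‖))))
    (Eventually.of_forall fun y => ?_)).trans (le_of_eq ?_)
  · rw [div_mul_eq_mul_div, le_div_iff₀ hE, norm_mul]
    have e := exp_assocFn_norm_le hA hμ.le x y
    have e1 := h l (x - y)
    have e2 := h' y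
    set E1 := Real.exp (assocFn Ap (2 * μ * ‖x - y‖))
    set E2 := Real.exp (assocFn Ap (2 * μ * ‖y‖))
    have hE1 : 0 < E1 := Real.exp_pos _
    have hE2 : 0 < E2 := Real.exp_pos _
    have e3 : E2 * ‖g y‖ ≤ (1 + ‖y‖) * E2 * ‖g y‖ := by
      rw [mul_assoc]
      exact le_mul_of_one_le_left (by positivity) (by linarith [norm_nonneg y])
    calc _ ≤ ‖derivAlong l f (x - y)‖ * ‖g y‖ * (E1 * E2) :=
          mul_le_mul_of_nonneg_left e (by positivity)
      _ = (‖derivAlong l f (x - y)‖ * E1) * (E2 * ‖g y‖) := by ring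
      _ ≤ (K * b ^ l.length * Mp l.length) * (K' * ((1 + ‖y‖) ^ (d + 1))⁻¹) :=
          mul_le_mul e1 (e3.trans e2) (by positivity) (by positivity)
      _ = _ := by ring
  · rw [integral_const_mul, ← hI]; ring

end GelfandShilov

/-! ### Cutting off and regularizing -/

section Approximation

variable {d : ℕ} {Mp Ap : ℕ → ℝ}

/-- Since `w` is bounded below by a multiple of `exp (-A(λ x))`, a function that is
rapidly decreasing relative to `1 / w` is rapidly decreasing. -/
lemma rapidDecay_of_weighted (hA : IsWeightSeq Ap)
    (hA2 : ∃ C0' H' : ℝ, 1 ≤ C0' ∧ 1 ≤ H' ∧ CondM2 Ap C0' H')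
    {w v : EuclideanSpace ℝ (Fin d) → ℝ} (hvpos : ∀ x, 0 < v x) {C lam : ℝ} (hC : 0 < C)
    (hlam : 0 < lam)
    (hbound : ∀ x t, v (x + t) ≤ C * w x * Real.exp (assocFn Ap (lam * ‖t‖)))
    {g : EuclideanSpace ℝ (Fin d) → ℂ}
    (hg : ∀ μ : ℝ, 0 < μ → ∃ K : ℝ, 0 ≤ K ∧ ∀ x,
      ‖g x‖ * w x * Real.exp (assocFn Ap (μ * ‖x‖)) ≤ K) : RapidDecay Ap g := by
  obtain ⟨C', H', hC', hH', h2⟩ := hA2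
  intro μ hμ
  have hν : 0 < max μ lam := lt_max_of_lt_left hμ
  obtain ⟨K, hK, h⟩ := hg (H' * max μ lam) (by positivity)
  have h0 := hA.1 0
  have hv0 := hvpos 0
  refine ⟨C * (C' * Ap 0) * K / v 0, by positivity, fun x => ?_⟩
  rw [le_div_iff₀ hv0]
  have e1 := hbound x (-x)
  rw [add_neg_cancel, norm_neg] at e1
  have e2 := exp_assocFn_mul_self_le hA (by linarith) (by linarith) h2
    (show 0 ≤ max μ lam * ‖x‖ by positivity)
  have e3 := h x
  rw [mul_assoc H'] at e3
  have m1 := exp_assocFn_mono hA (show 0 ≤ μ * ‖x‖ by positivity)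
    (mul_le_mul_of_nonneg_right (le_max_left μ lam) (norm_nonneg x))
  have m2 := exp_assocFn_mono hA (show 0 ≤ lam * ‖x‖ by positivity)
    (mul_le_mul_of_nonneg_right (le_max_right μ lam) (norm_nonneg x))
  have hE := Real.exp_pos (assocFn Ap (max μ lam * ‖x‖))
  have hE1 := Real.exp_pos (assocFn Ap (μ * ‖x‖))
  have hE2 := Real.exp_pos (assocFn Ap (lam * ‖x‖))
  have hw : 0 ≤ w x := by
    by_contra hneg
    have : C * w x * Real.exp (assocFn Ap (lam * ‖x‖)) < 0 :=
      mul_neg_of_neg_of_pos (mul_neg_of_pos_of_neg hC (not_le.1 hneg)) hE2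
    linarith
  calc _ ≤ ‖g x‖ * Real.exp (assocFn Ap (μ * ‖x‖)) *
        (C * w x * Real.exp (assocFn Ap (lam * ‖x‖))) :=
        mul_le_mul_of_nonneg_left e1 (by positivity)
    _ = (C * ‖g x‖ * w x) *
        (Real.exp (assocFn Ap (μ * ‖x‖)) * Real.exp (assocFn Ap (lam * ‖x‖))) := by ring
    _ ≤ (C * ‖g x‖ * w x) * (Real.exp (assocFn Ap (max μ lam * ‖x‖)) *
        Real.exp (assocFn Ap (max μ lam * ‖x‖))) :=
        mul_le_mul_of_nonneg_left (mul_le_mul m1 m2 hE2.le hE.le) (by positivity)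
    _ ≤ (C * ‖g x‖ * w x) * (C' * Ap 0 * Real.exp (assocFn Ap (H' * (max μ lam * ‖x‖)))) :=
        mul_le_mul_of_nonneg_left e2 (by positivity)
    _ = C * (C' * Ap 0) * (‖g x‖ * w x * Real.exp (assocFn Ap (H' * (max μ lam * ‖x‖)))) := by ring
    _ ≤ _ := mul_le_mul_of_nonneg_left e3 (by positivity)

/-- The scalar part of the cutoff estimate: if `u` is bounded above and vanishes at infinity and
`θ` is bounded and continuous with `θ 0 = 1`, then `u(x) (|1 - θ(δ x)| + δ)` is uniformly small for
small `δ`. -/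
lemma exists_cutoff_scale {u : EuclideanSpace ℝ (Fin d) → ℝ} {θ : EuclideanSpace ℝ (Fin d) → ℂ}
    {C B : ℝ} (hC : 0 < C) (hB : 0 ≤ B) (huC : ∀ x, u x ≤ C)
    (hlim : Tendsto u (cocompact (EuclideanSpace ℝ (Fin d))) (nhds 0))
    (hθ : Continuous θ) (hθB : ∀ x, ‖θ x‖ ≤ B) (hθ0 : θ 0 = 1) {η : ℝ} (hη : 0 < η) :
    ∃ δ : ℝ, 0 < δ ∧ δ ≤ 1 ∧ ∀ x, u x * (‖1 - θ (δ • x)‖ + δ) ≤ η := by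
  have h1 : ∀ᶠ x in cocompact (EuclideanSpace ℝ (Fin d)), u x < η / (B + 2) :=
    hlim.eventually_lt_const (by positivity)
  rw [← Metric.cobounded_eq_cocompact] at h1
  obtain ⟨R, -, hR⟩ := (Metric.hasBasis_cobounded_compl_closedBall
    (0 : EuclideanSpace ℝ (Fin d))).eventually_iff.1 h1
  have h2 := Metric.continuousAt_iff.1 (hθ.continuousAt (x := 0)) (η / (2 * C)) (by positivity)
  obtain ⟨ρ, hρ, h2⟩ := h2
  refine ⟨min (min 1 (η / (2 * C))) (ρ / (|R| + 1)), by positivity,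
    (min_le_left _ _).trans (min_le_left _ _), fun x => ?_⟩
  set δ := min (min 1 (η / (2 * C))) (ρ / (|R| + 1)) with hδdef
  have hδ0 : 0 < δ := by positivity
  have hδ1 : δ ≤ 1 := (min_le_left _ _).trans (min_le_left _ _)
  have hδ2 : δ ≤ η / (2 * C) := (min_le_left _ _).trans (min_le_right _ _)
  have hδ3 : δ ≤ ρ / (|R| + 1) := min_le_right _ _
  by_cases hx : ‖x‖ ≤ R
  · have hdist : dist (δ • x) 0 < ρ := by
      rw [dist_zero_right, norm_smul, Real.norm_of_nonneg hδ0.le]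
      have hxR : ‖x‖ < |R| + 1 := by linarith [le_abs_self R]
      calc δ * ‖x‖ < δ * (|R| + 1) := mul_lt_mul_of_pos_left hxR hδ0
        _ ≤ ρ := (le_div_iff₀ (by positivity)).1 hδ3
    have h3 := h2 hdist
    rw [hθ0, dist_comm, dist_eq_norm] at h3
    calc _ ≤ C * (η / (2 * C) + η / (2 * C)) :=
          mul_le_mul (huC x) (add_le_add h3.le hδ2) (by positivity) hC.le
      _ = η := by field_simp; norm_num
  · have h3 : u x < η / (B + 2) := hR (by simpa using hx)
    have h4 : ‖1 - θ (δ • x)‖ + δ ≤ B + 2 := by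
      have := norm_sub_le 1 (θ (δ • x))
      have := hθB (δ • x)
      rw [norm_one] at *
      linarith
    calc _ ≤ η / (B + 2) * (B + 2) := mul_le_mul h3.le h4 (by positivity) (by positivity)
      _ = η := by field_simp

/-- Approximation by the cutoffs `φ θ(δ ·)`, which are rapidly decreasing relative to `1 / w`. -/
lemma exists_cutoff (hM : ∀ p, 0 < Mp p) (h1 : CondM1 Mp) (hA : IsWeightSeq Ap)
    {w v : EuclideanSpace ℝ (Fin d) → ℝ} (hwpos : ∀ x, 0 < w x) (hvpos : ∀ x, 0 < v x)
    (hvw : Tendsto (fun x => v x / w x) (cocompact (EuclideanSpace ℝ (Fin d))) (nhds 0))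
    {C : ℝ} (hC : 0 < C) (hvC : ∀ x, v x ≤ C * w x)
    {θ : EuclideanSpace ℝ (Fin d) → ℂ} (hθ : memGS Mp Ap θ) (hθ0 : θ 0 = 1)
    {φ : EuclideanSpace ℝ (Fin d) → ℂ} (hφ : ContDiff ℝ (⊤ : ℕ∞) φ) {F s a : ℝ} (hF : 0 ≤ F)
    (hs : 0 ≤ s) (hsa : s < a)
    (hφb : ∀ (l : List (Fin d)) x, ‖derivAlong l φ x‖ * w x ≤ F * s ^ l.length * Mp l.length)
    {ε : ℝ} (hε : 0 < ε) :
    ∃ g : EuclideanSpace ℝ (Fin d) → ℂ, ContDiff ℝ (⊤ : ℕ∞) g ∧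
      (∀ μ : ℝ, 0 < μ → ∃ K : ℝ, 0 ≤ K ∧ ∀ (l : List (Fin d)) x, ‖derivAlong l g x‖ * w x *
        Real.exp (assocFn Ap (μ * ‖x‖)) ≤ K * a ^ l.length * Mp l.length) ∧
      ∀ (l : List (Fin d)) x, ‖derivAlong l (fun x => φ x - g x) x‖ * v x ≤
        ε * a ^ l.length * Mp l.length := by
  have h0 := hM 0
  have hb : 0 < a - s := by linarith
  have hφF : ∀ x (l : List (Fin d)), ‖derivAlong l φ x‖ ≤ F / w x * s ^ l.length * Mp l.length := by
    intro x l
    rw [div_mul_eq_mul_div, div_mul_eq_mul_div, le_div_iff₀ (hwpos x)]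
    exact hφb l x
  obtain ⟨Kθ, hKθ, hθb⟩ := (memGS_iff hM hA hθ.1).1 hθ (a - s) hb 1 one_pos
  have hθb' : ∀ (l : List (Fin d)) x, ‖derivAlong l θ x‖ ≤ Kθ * (a - s) ^ l.length * Mp l.length :=
    fun l x => (le_mul_of_one_le_right (norm_nonneg _)
      (one_le_exp_assocFn hA (by positivity))).trans (hθb l x)
  obtain ⟨Bθ, hBθ⟩ := (hθ.rapidDecay hM hA []).bounded hA
  -- The factor below absorbs the constants of the product estimate.
  set T := F * Mp 0 * ((Mp 0)⁻¹ + Kθ) with hT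
  have hT0 : 0 ≤ T := by positivity
  obtain ⟨δ, hδ, hδ1, hδu⟩ := exists_cutoff_scale (u := fun x => v x / w x) (θ := θ)
    hC ((norm_nonneg _).trans (hBθ 0))
    (fun x => (div_le_iff₀ (hwpos x)).2 (hvC x)) hvw hθ.1.continuous hBθ hθ0
    (show 0 < ε / (T + 1) by positivity)
  have hθδ := hθ.comp_smul hM hA hδ
  refine ⟨fun x => φ x * θ (δ • x), hφ.mul hθδ.1, fun μ hμ => ?_, fun l x => ?_⟩
  · obtain ⟨K, hK, h⟩ := (memGS_iff hM hA hθδ.1).1 hθδ (a - s) hb μ hμ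
    refine ⟨F * K * Mp 0, by positivity, fun l x => ?_⟩
    have hE := Real.exp_pos (assocFn Ap (μ * ‖x‖))
    have hw := hwpos x
    have e := norm_derivAlong_mul_le hM h1 hφ hθδ.1 (x := x) (F := F / w x)
      (G := K / Real.exp (assocFn Ap (μ * ‖x‖))) (by positivity) (by positivity) hs hb.le (hφF x)
      (fun l => by
        rw [div_mul_eq_mul_div, div_mul_eq_mul_div, le_div_iff₀ hE]; exact h l x) l
    rw [add_sub_cancel] at e
    calc _ ≤ _ := mul_le_mul_of_nonneg_right (mul_le_mul_of_nonneg_right e hw.le) hE.le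
      _ = _ := by field_simp
  · have hw := hwpos x
    have hv := hvpos x
    have hc1 : ContDiff ℝ (⊤ : ℕ∞) fun x => 1 - θ (δ • x) := contDiff_const.sub hθδ.1
    have heq : (fun x => φ x - φ x * θ (δ • x)) = fun x => φ x * (1 - θ (δ • x)) := by
      funext x; ring
    rw [heq]
    have hG : ∀ l : List (Fin d), ‖derivAlong l (fun x => 1 - θ (δ • x)) x‖ ≤
        (‖1 - θ (δ • x)‖ * (Mp 0)⁻¹ + δ * Kθ) * (a - s) ^ l.length * Mp l.length := by
      intro l
      rcases l with _ | ⟨i, l⟩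
      · simp only [derivAlong, List.length_nil, pow_zero, mul_one]
        rw [add_mul, inv_mul_cancel_right₀ h0.ne']
        have : 0 ≤ δ * Kθ * Mp 0 := by positivity
        linarith
      · rw [derivAlong_sub contDiff_const hθδ.1, derivAlong_const, derivAlong_comp_smul hθ.1]
        simp only [zero_sub, norm_neg, norm_mul, norm_pow, Complex.norm_real,
          Real.norm_of_nonneg hδ.le]
        have hp := hM (i :: l).length
        have e1 : δ ^ (i :: l).length ≤ δ := pow_le_of_le_one hδ.le hδ1 (by simp)
        calc _ ≤ δ * (Kθ * (a - s) ^ (i :: l).length * Mp (i :: l).length) :=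
              mul_le_mul e1 (hθb' _ _) (norm_nonneg _) hδ.le
          _ = (0 + δ * Kθ) * (a - s) ^ (i :: l).length * Mp (i :: l).length := by ring
          _ ≤ _ := by gcongr; positivity
    have e := norm_derivAlong_mul_le hM h1 hφ hc1 (x := x) (F := F / w x) (by positivity)
      (by positivity) hs hb.le (hφF x) hG l
    rw [add_sub_cancel] at e
    have hp := hM l.length
    have ha : 0 < a := by linarith
    have e2 := hδu x
    have e3 : ‖1 - θ (δ • x)‖ * (Mp 0)⁻¹ + δ * Kθ ≤
        (‖1 - θ (δ • x)‖ + δ) * ((Mp 0)⁻¹ + Kθ) := by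
      have h3 : 0 ≤ ‖1 - θ (δ • x)‖ * Kθ := by positivity
      have h4 : 0 ≤ δ * (Mp 0)⁻¹ := by positivity
      linarith
    calc _ ≤ _ := mul_le_mul_of_nonneg_right e hv.le
      _ ≤ F / w x * ((‖1 - θ (δ • x)‖ + δ) * ((Mp 0)⁻¹ + Kθ)) * Mp 0 * a ^ l.length *
          Mp l.length * v x := by gcongr
      _ = (v x / w x * (‖1 - θ (δ • x)‖ + δ)) * T * a ^ l.length * Mp l.length := by
          rw [hT]; ring
      _ ≤ (ε / (T + 1)) * T * a ^ l.length * Mp l.length := by gcongr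
      _ ≤ ε * a ^ l.length * Mp l.length := by
          gcongr
          rw [div_mul_eq_mul_div, div_le_iff₀ (by positivity)]
          nlinarith

/-- Approximation by the regularizations `g * ψ_δ`. The mean value theorem costs one derivative,
which (M.2) pays for at the price of the factor `H`. -/
lemma exists_regularization {C0 H : ℝ} (hM : ∀ p, 0 < Mp p) (hA : IsWeightSeq Ap)
    (hC0 : 1 ≤ C0) (hH : 1 ≤ H) (hM2 : CondM2 Mp C0 H)
    (hA2 : ∃ C0' H' : ℝ, 1 ≤ C0' ∧ 1 ≤ H' ∧ CondM2 Ap C0' H')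
    {w v : EuclideanSpace ℝ (Fin d) → ℝ} (hwpos : ∀ x, 0 < w x) (hvpos : ∀ x, 0 < v x)
    {C lam : ℝ} (hC : 0 < C) (hlam : 0 < lam)
    (hbound : ∀ x t, v (x + t) ≤ C * w x * Real.exp (assocFn Ap (lam * ‖t‖)))
    {ψ : EuclideanSpace ℝ (Fin d) → ℂ} (hψ : memGS Mp Ap ψ) (hψ1 : ∫ x, ψ x = 1)
    {g : EuclideanSpace ℝ (Fin d) → ℂ} (hg : ContDiff ℝ (⊤ : ℕ∞) g)
    (hgd : ∀ l, RapidDecay Ap (derivAlong l g)) {G a : ℝ} (hG : 0 ≤ G) (ha : 0 < a)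
    (hgw : ∀ (l : List (Fin d)) x, ‖derivAlong l g x‖ * w x ≤ G * a ^ l.length * Mp l.length)
    {ε : ℝ} (hε : 0 < ε) :
    ∃ χ : EuclideanSpace ℝ (Fin d) → ℂ, memGS Mp Ap χ ∧
      ∀ (l : List (Fin d)) x, ‖derivAlong l (fun x => g x - χ x) x‖ * v x ≤
        ε * (a * H) ^ l.length * Mp l.length := by
  have hψi : Integrable ψ :=
    RapidDecay.integrable hA hA2 (hψ.rapidDecay hM hA []) hψ.1.continuous
  obtain ⟨K, hK, hψw⟩ := RapidDecay.weighted hA hA2 (hψ.rapidDecay hM hA []) hlam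
  set I := ∫ y : EuclideanSpace ℝ (Fin d), ((1 + ‖y‖) ^ (d + 1))⁻¹ with hI
  have hI0 : 0 ≤ I := integral_nonneg fun y => by positivity
  have hm1 := hM 1
  have hC0' : 0 < C0 := by linarith
  have hH0 : 0 < H := by linarith
  set T := d * (G * (a * H) * C0 * Mp 1 * C) * K * I with hT
  have hT0 : 0 ≤ T := by positivity
  set δ := min 1 (ε / (T + 1)) with hδdef
  have hδ : 0 < δ := by positivity
  have hδ1 : δ ≤ 1 := min_le_left _ _
  have hδε : δ * T ≤ ε := by
    have := (le_div_iff₀ (by positivity)).1 (min_le_right 1 (ε / (T + 1)))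
    rw [← hδdef] at this
    nlinarith
  clear_value δ T I
  set ψδ : EuclideanSpace ℝ (Fin d) → ℂ := fun y => ((δ ^ d)⁻¹ : ℝ) * ψ (δ⁻¹ • y) with hψδ
  have hψδm : memGS Mp Ap ψδ := (hψ.comp_smul hM hA (inv_pos.2 hδ)).const_mul hM hA _
  have hψδi : Integrable ψδ :=
    RapidDecay.integrable hA hA2 (hψδm.rapidDecay hM hA []) hψδm.1.continuous
  have hgB : ∀ l, ∃ B, ∀ x, ‖derivAlong l g x‖ ≤ B := fun l => (hgd l).bounded hA
  have hmem : memGS Mp Ap fun x => ∫ y, g (x - y) * ψδ y := by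
    simp_rw [conv_comm g ψδ]
    exact hψδm.conv hM hA hA2 (hgd []) hg.continuous
  refine ⟨_, hmem, fun l x => ?_⟩
  have hp := hM l.length
  have hv := hvpos x
  rw [derivAlong_sub hg hmem.1, (derivAlong_conv hg hgB hψδi l).1]
  simp only [hψδ]
  rw [conv_dilate _ _ hδ]
  have hcont : Continuous (derivAlong l g) := (contDiff_derivAlong hg l).continuous
  have hintg : Integrable fun y => derivAlong l g (x - δ • y) * ψ y := by
    obtain ⟨B, hB⟩ := hgB l
    exact hψi.bdd_mul (by fun_prop) (Eventually.of_forall fun y => hB _)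
  have hsub : derivAlong l g x - ∫ y, derivAlong l g (x - δ • y) * ψ y =
      ∫ y, (derivAlong l g x - derivAlong l g (x - δ • y)) * ψ y := by
    simp_rw [sub_mul]
    rw [integral_sub (hψi.const_mul _) hintg, integral_const_mul, hψ1, mul_one]
  rw [hsub, ← le_div_iff₀ hv]
  set D := G * a ^ (l.length + 1) * Mp (l.length + 1) * C with hD
  have hp1 := hM (l.length + 1)
  have hD0 : 0 ≤ D := by positivity
  have hmv : ∀ y, ‖derivAlong l g x - derivAlong l g (x - δ • y)‖ ≤
      d * (D * Real.exp (assocFn Ap (lam * ‖y‖)) / v x) * (δ * ‖y‖) := by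
    intro y
    have hny : ‖δ • y‖ = δ * ‖y‖ := by rw [norm_smul, Real.norm_of_nonneg hδ.le]
    have hfd : ∀ z ∈ Metric.closedBall x (δ * ‖y‖), ‖fderiv ℝ (derivAlong l g) z‖ ≤
        d * (D * Real.exp (assocFn Ap (lam * ‖y‖)) / v x) := by
      intro z hz
      refine norm_fderiv_le_of_partials _ _ (by positivity) fun i => ?_
      rw [le_div_iff₀ hv]
      have e1 := hbound z (x - z)
      rw [add_sub_cancel] at e1
      have hxz : ‖x - z‖ ≤ ‖y‖ := by
        rw [← dist_eq_norm, dist_comm]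
        exact (Metric.mem_closedBall.1 hz).trans (mul_le_of_le_one_left (norm_nonneg _) hδ1)
      have e2 := exp_assocFn_mono hA (show 0 ≤ lam * ‖x - z‖ by positivity)
        (mul_le_mul_of_nonneg_left hxz hlam.le)
      have e3 := hgw (i :: l) z
      rw [derivAlong_cons_apply] at e3
      have hw := hwpos z
      calc _ ≤ ‖fderiv ℝ (derivAlong l g) z (EuclideanSpace.single i 1)‖ *
            (C * w z * Real.exp (assocFn Ap (lam * ‖y‖))) :=
            mul_le_mul_of_nonneg_left (e1.trans (by gcongr)) (norm_nonneg _)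
        _ = (‖fderiv ℝ (derivAlong l g) z (EuclideanSpace.single i 1)‖ * w z) *
            (C * Real.exp (assocFn Ap (lam * ‖y‖))) := by ring
        _ ≤ _ := mul_le_mul_of_nonneg_right e3 (by positivity)
        _ = _ := by rw [hD, List.length_cons]; ring
    have := (convex_closedBall x (δ * ‖y‖)).norm_image_sub_le_of_norm_fderiv_le
      (fun z _ => differentiable_derivAlong hg l z) hfd
      (x := x - δ • y) (y := x) (by simp [hny]) (Metric.mem_closedBall_self (mul_nonneg hδ.le (norm_nonneg y)))
    rwa [sub_sub_cancel, hny] at this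
  refine (norm_integral_le_of_norm_le (integrable_decay.const_mul (d * D / v x * δ * K))
    (Eventually.of_forall fun y => ?_)).trans ?_
  · rw [norm_mul]
    have e := hψw y
    have e4 : ‖y‖ * Real.exp (assocFn Ap (lam * ‖y‖)) * ‖ψ y‖ ≤
        (1 + ‖y‖) * Real.exp (assocFn Ap (lam * ‖y‖)) * ‖ψ y‖ := by gcongr; linarith
    calc _ ≤ _ := mul_le_mul_of_nonneg_right (hmv y) (norm_nonneg _)
      _ = (d * D / v x * δ) * (‖y‖ * Real.exp (assocFn Ap (lam * ‖y‖)) * ‖ψ y‖) := by ring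
      _ ≤ (d * D / v x * δ) * (K * ((1 + ‖y‖) ^ (d + 1))⁻¹) :=
          mul_le_mul_of_nonneg_left (e4.trans e) (by positivity)
      _ = _ := by ring
  · rw [integral_const_mul, ← hI, le_div_iff₀ hv]
    have e5 : D ≤ (G * (a * H) * C0 * Mp 1 * C) * (a * H) ^ l.length * Mp l.length := by
      have := hM2 l.length 1
      calc D ≤ G * a ^ (l.length + 1) * (C0 * H ^ (l.length + 1) * Mp l.length * Mp 1) * C := by
            rw [hD]; gcongr
        _ = _ := by rw [mul_pow]; ring
    calc _ = δ * d * D * K * I := by field_simp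
      _ ≤ δ * d * ((G * (a * H) * C0 * Mp 1 * C) * (a * H) ^ l.length * Mp l.length) * K * I := by
          gcongr
      _ = (δ * T) * (a * H) ^ l.length * Mp l.length := by rw [hT]; ring
      _ ≤ _ := by gcongr

end Approximation


/-- density of `S^{(M_p)}_{(A_p)}(ℝ^d)` in `B^{M_p,h}_w(ℝ^d)` with respect
to the norm `‖·‖_{B^{M_p,k}_v}` whenever `0 < kH < h`. -/
theorem GS_dense_in_Bspace
    (d : ℕ) (Mp Ap : ℕ → ℝ) (C0 H : ℝ)
    (hMw : IsWeightSeq Mp) (hAw : IsWeightSeq Ap)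
    (hM1 : CondM1 Mp) (hA1 : CondM1 Ap)
    (hC0 : 1 ≤ C0) (hH : 1 ≤ H) (hM2 : CondM2 Mp C0 H)
    (hA2 : ∃ C0' H' : ℝ, 1 ≤ C0' ∧ 1 ≤ H' ∧ CondM2 Ap C0' H')
    (hfact : factLtMA Mp Ap)
    (hnontriv : ∃ φ : EuclideanSpace ℝ (Fin d) → ℂ, φ ≠ 0 ∧ memGS Mp Ap φ)
    (w v : EuclideanSpace ℝ (Fin d) → ℝ)
    (hwpos : ∀ x, 0 < w x) (hvpos : ∀ x, 0 < v x)
    (hwcont : Continuous w) (hvcont : Continuous v)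
    (hvw : Tendsto (fun x => v x / w x) (cocompact (EuclideanSpace ℝ (Fin d))) (nhds 0))
    (C lam : ℝ) (hC : 0 < C) (hlam : 0 < lam)
    (hbound : ∀ x t : EuclideanSpace ℝ (Fin d),
      v (x + t) ≤ C * w x * Real.exp (assocFn Ap (lam * ‖t‖)))
    (h k : ℝ) (hk : 0 < k) (hkh : k * H < h) :
    ∀ φ : EuclideanSpace ℝ (Fin d) → ℂ, ContDiff ℝ (⊤ : ℕ∞) φ → Bnorm Mp h w φ < ⊤ →
      ∀ ε : ℝ, 0 < ε → ∃ χ : EuclideanSpace ℝ (Fin d) → ℂ, memGS Mp Ap χ ∧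
        Bnorm Mp k v (fun x => φ x - χ x) ≤ ENNReal.ofReal ε := by
  intro φ hφ hφB ε hε
  have hM := hMw.1
  have hH0 : 0 < H := by linarith
  have hkH : 0 < k * H := by positivity
  have hh : 0 < h := hkH.trans hkh
  have h0 : Real.exp (assocFn Ap 0) = 1 := by simp [assocFn]
  obtain ⟨F, hF, hφb⟩ := (Bnorm_lt_top hM hh hφ).1 hφB
  obtain ⟨θ, hθ, hθ0⟩ := exists_GS_one_at_zero hM hAw hnontriv
  obtain ⟨ψ, hψ, hψ1⟩ := exists_GS_integral_one hM hM1 hAw hA2 hnontriv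
  -- Regularity is lowered from `1/h` to `1/(kH)` by the cutoff, then to `1/k` by regularizing.
  have ha : 0 < (k * H)⁻¹ := inv_pos.2 hkH
  obtain ⟨g, hg, hgd, hgε⟩ := exists_cutoff hM hM1 hAw hwpos hvpos hvw hC
    (fun x => by simpa [h0] using hbound x 0) hθ hθ0 hφ hF (inv_pos.2 hh).le
    (inv_strictAnti₀ hkH hkh) hφb (half_pos hε)
  have hgr : ∀ l, RapidDecay Ap (derivAlong l g) := fun l =>
    rapidDecay_of_weighted hAw hA2 hvpos hC hlam hbound fun μ hμ => by
      obtain ⟨K, hK, hb⟩ := hgd μ hμ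
      have := hM l.length
      exact ⟨K * (k * H)⁻¹ ^ l.length * Mp l.length, by positivity, hb l⟩
  obtain ⟨G, hG, hgG⟩ := hgd 1 one_pos
  have hgw : ∀ (l : List (Fin d)) x, ‖derivAlong l g x‖ * w x ≤
      G * (k * H)⁻¹ ^ l.length * Mp l.length := fun l x =>
    (le_mul_of_one_le_right (mul_nonneg (norm_nonneg _) (hwpos x).le)
      (one_le_exp_assocFn hAw (by positivity))).trans (hgG l x)
  obtain ⟨χ, hχ, hχε⟩ := exists_regularization hM hAw hC0 hH hM2 hA2 hwpos hvpos hC hlam hbound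
    hψ hψ1 hg hgr hG ha hgw (half_pos hε)
  refine ⟨χ, hχ, (Bnorm_le_iff hM hk (hφ.sub hχ.1) hε.le).2 fun l x => ?_⟩
  have hp := hM l.length
  have hv := hvpos x
  have hak : (k * H)⁻¹ * H = k⁻¹ := by field_simp
  have hle : (k * H)⁻¹ ≤ k⁻¹ := inv_anti₀ hk (le_mul_of_one_le_right hk.le hH)
  have e1 := hgε l x
  have e2 := hχε l x
  rw [hak] at e2
  rw [derivAlong_sub hφ hg] at e1
  rw [derivAlong_sub hg hχ.1] at e2
  rw [derivAlong_sub hφ hχ.1]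
  have e3 : ε / 2 * (k * H)⁻¹ ^ l.length * Mp l.length ≤ ε / 2 * k⁻¹ ^ l.length * Mp l.length := by
    gcongr
  have e4 : ‖derivAlong l φ x - derivAlong l χ x‖ ≤ ‖derivAlong l φ x - derivAlong l g x‖ +
      ‖derivAlong l g x - derivAlong l χ x‖ := norm_sub_le_norm_sub_add_norm_sub _ _ _
  calc _ ≤ _ := mul_le_mul_of_nonneg_right e4 hv.le
    _ ≤ ε / 2 * k⁻¹ ^ l.length * Mp l.length + ε / 2 * k⁻¹ ^ l.length * Mp l.length := by
        rw [add_mul]; exact add_le_add (e1.trans e3) e2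
    _ = _ := by ring
end

section
/- Let M_p be a weight sequence, let w be a positive function on ℝ^d, let 0 < l ≤ k ≤ h, and let N_0 ∈ ℕ. Then for every φ ∈ C^∞(ℝ^d), ‖φ‖_{B^{M_p,k}_w} ≤ max{ (k/l)^{N_0}·‖φ‖_{B^{M_p,l}_w}, (k/h)^{N_0}·‖φ‖_{B^{M_p,h}_w} } (an inequality in [0,∞]). (This is the key estimate in the proof that the space B^{{M_p}}_W(ℝ^d) is boundedly stable.) -/
/-!
The estimate holds term by term. A term of order `n = |α|` in the `k`-norm is `(k / r) ^ n` times the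
corresponding term in the `r`-norm. For `n ≤ N0` take `r = l`, where `k / l ≥ 1` gives
`(k / l) ^ n ≤ (k / l) ^ N0`; for `n ≥ N0` take `r = h`, where `k / h ≤ 1` gives
`(k / h) ^ n ≤ (k / h) ^ N0`.
-/

open scoped ENNReal
open MeasureTheory Filter

/-- Termwise bound: if `k ^ |α| ≤ c * r ^ |α|`, then the terms of index `α` in the `k`-norm are at
most `c` times those of the `r`-norm, hence at most `c` times the `r`-norm. -/
theorem term_le_mul_Bnorm {d : ℕ} {Mp : ℕ → ℝ} (hM : ∀ p, 0 < Mp p)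
    {w : EuclideanSpace ℝ (Fin d) → ℝ} (hw : ∀ x, 0 < w x) {k r c : ℝ} (hc : 0 ≤ c)
    (φ : EuclideanSpace ℝ (Fin d) → ℂ) (α : Fin d → ℕ) (x : EuclideanSpace ℝ (Fin d))
    (hle : k ^ (∑ i, α i) ≤ c * r ^ (∑ i, α i)) :
    ENNReal.ofReal (k ^ (∑ i, α i) * ‖mderiv α φ x‖ * w x / Mp (∑ i, α i)) ≤
      ENNReal.ofReal c * Bnorm Mp r w φ := by
  have hMα := hM (∑ i, α i)
  have hwx := hw x
  calc ENNReal.ofReal (k ^ (∑ i, α i) * ‖mderiv α φ x‖ * w x / Mp (∑ i, α i))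
      ≤ ENNReal.ofReal
          (c * (r ^ (∑ i, α i) * ‖mderiv α φ x‖ * w x / Mp (∑ i, α i))) := by
        apply ENNReal.ofReal_le_ofReal
        rw [← mul_div_assoc, ← mul_assoc, ← mul_assoc]
        gcongr
    _ = ENNReal.ofReal c *
          ENNReal.ofReal (r ^ (∑ i, α i) * ‖mderiv α φ x‖ * w x / Mp (∑ i, α i)) :=
        ENNReal.ofReal_mul hc
    _ ≤ ENNReal.ofReal c * Bnorm Mp r w φ := by
        gcongr
        exact le_iSup₂ (f := fun (α : Fin d → ℕ) (x : EuclideanSpace ℝ (Fin d)) =>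
          ENNReal.ofReal (r ^ (∑ i, α i) * ‖mderiv α φ x‖ * w x / Mp (∑ i, α i))) α x

/-- the key estimate in the proof of bounded stability:
`‖φ‖_{B^{M_p,k}_w} ≤ max ((k/l)^{N₀} ‖φ‖_{B^{M_p,l}_w}, (k/h)^{N₀} ‖φ‖_{B^{M_p,h}_w})`. -/
theorem Bnorm_le_max_estimate
    (d : ℕ) (Mp : ℕ → ℝ) (hMw : IsWeightSeq Mp)
    (w : EuclideanSpace ℝ (Fin d) → ℝ) (hwpos : ∀ x, 0 < w x)
    (l k h : ℝ) (hl : 0 < l) (hlk : l ≤ k) (hkh : k ≤ h) (N0 : ℕ)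
    (φ : EuclideanSpace ℝ (Fin d) → ℂ) (hφ : ContDiff ℝ (⊤ : ℕ∞) φ) :
    Bnorm Mp k w φ ≤
      max (ENNReal.ofReal ((k / l) ^ N0) * Bnorm Mp l w φ)
        (ENNReal.ofReal ((k / h) ^ N0) * Bnorm Mp h w φ) := by
  have hk : 0 < k := hl.trans_le hlk
  have hh : 0 < h := hk.trans_le hkh
  refine iSup₂_le fun α x => ?_
  rcases le_total (∑ i, α i) N0 with hn | hn
  · refine le_max_of_le_left (term_le_mul_Bnorm hMw.1 hwpos (by positivity) φ α x ?_)
    -- Since `k / l ≥ 1`, low orders satisfy `(k / l) ^ |α| ≤ (k / l) ^ N0`.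
    rw [← div_le_iff₀ (by positivity), ← div_pow]
    exact pow_le_pow_right₀ ((one_le_div hl).2 hlk) hn
  · refine le_max_of_le_right (term_le_mul_Bnorm hMw.1 hwpos (by positivity) φ α x ?_)
    -- Since `k / h ≤ 1`, high orders satisfy `(k / h) ^ |α| ≤ (k / h) ^ N0`.
    rw [← div_le_iff₀ (by positivity), ← div_pow]
    exact pow_le_pow_of_le_one (by positivity) ((div_le_one hh).2 hkh) hn
end

section
/- Let X be a completely regular Hausdorff topological space, let V = (v_n)_{n∈ℕ} be a decreasing weight system on X, and let f be a nonnegative function on X. Then sup_{x∈X} f(x)·v_n(x) < ∞ for some n ∈ ℕ if and only if sup_{x∈X} f(x)·v(x) < ∞ for every v in the maximal Nachbin family V̄ associated with V. -/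
/-!
If `f · v n ≤ C` and `v / v n ≤ D`, then `f · v = (f · v n) (v / v n) ≤ C D`; this is the forward
direction.

For the converse, suppose that `f · v n` is unbounded for every `n` and pick points `x n` with
`f (x n) * v n (x n) > n`. The function `v = inf_k a k • v k` belongs to the maximal Nachbin family
for any constants `a k ≥ 0`. Since only finitely many points `x n` with `n < k` have to be taken
into account, `a k` can be chosen so large that `v n (x n) ≤ a k * v k (x n)` for all `n < k`, and
`a k ≥ 1` gives the same inequality for `k ≤ n` because the weights decrease. Hence
`v n (x n) ≤ v (x n)`, so `f · v` is unbounded (`exists_inNachbin_ge_on_seq`).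
-/

/-- A decreasing weight system: a pointwise decreasing sequence of positive continuous
functions. -/
def DecWeightSys {X : Type*} [TopologicalSpace X] (v : ℕ → X → ℝ) : Prop :=
  (∀ n, Continuous (v n)) ∧ (∀ n x, 0 < v n x) ∧ (∀ n x, v (n + 1) x ≤ v n x)

/-- Membership in the maximal Nachbin family associated with the decreasing weight
system `V`: nonnegative upper semicontinuous functions `v` with `sup v/v_n < ∞` for
every `n`. -/
def InNachbin {X : Type*} [TopologicalSpace X] (V : ℕ → X → ℝ) (v : X → ℝ) : Prop :=
  (∀ x, 0 ≤ v x) ∧ UpperSemicontinuous v ∧ ∀ n : ℕ, ∃ C : ℝ, ∀ x, v x / V n x ≤ C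

/-- Along any sequence of points, some element of the maximal Nachbin family dominates the diagonal
values `V n (x n)`. -/
lemma exists_inNachbin_ge_on_seq {X : Type*} [TopologicalSpace X]
    (V : ℕ → X → ℝ) (hV : DecWeightSys V) (x : ℕ → X) :
    ∃ v : X → ℝ, InNachbin V v ∧ ∀ n, V n (x n) ≤ v (x n) := by
  obtain ⟨hc, hpos, hdec⟩ := hV
  have hanti : ∀ y, Antitone fun n => V n y := fun y => antitone_nat_of_succ_le fun n => hdec n y
  let a : ℕ → ℝ := fun k => 1 + ∑ n ∈ Finset.range k, V n (x n) / V k (x n)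
  have hterm : ∀ k n, 0 ≤ V n (x n) / V k (x n) := fun k n =>
    (div_pos (hpos _ _) (hpos _ _)).le
  have ha : ∀ k, 1 ≤ a k := fun k =>
    le_add_of_nonneg_right (Finset.sum_nonneg fun n _ => hterm k n)
  have hnn : ∀ k y, 0 ≤ a k * V k y := fun k y =>
    mul_nonneg (zero_le_one.trans (ha k)) (hpos k y).le
  have hbdd : ∀ y, BddBelow (Set.range fun k => a k * V k y) := fun y =>
    ⟨0, by rintro _ ⟨k, rfl⟩; exact hnn k y⟩
  refine ⟨fun y => ⨅ k, a k * V k y, ⟨fun y => le_ciInf fun k => hnn k y, ?_, fun n => ⟨a n, ?_⟩⟩,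
    fun n => le_ciInf fun k => ?_⟩
  · exact upperSemicontinuous_ciInf hbdd fun k =>
      (continuous_const.mul (hc k)).upperSemicontinuous
  · intro y
    rw [div_le_iff₀ (hpos n y)]
    exact ciInf_le (hbdd y) n
  · rcases le_or_gt k n with h | h
    · exact (hanti (x n) h).trans (le_mul_of_one_le_left (hpos _ _).le (ha k))
    · rw [← div_le_iff₀ (hpos k (x n))]
      have := Finset.single_le_sum (f := fun n => V n (x n) / V k (x n))
        (fun n _ => hterm k n) (Finset.mem_range.2 h)
      exact this.trans (le_add_of_nonneg_left zero_le_one)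

/-- `sup f·v_n < ∞` for some `n` iff `sup f·v < ∞` for every `v` in the
maximal Nachbin family. -/
theorem bounded_some_weight_iff_bounded_all_Nachbin
    {X : Type*} [TopologicalSpace X] [CompletelyRegularSpace X] [T2Space X]
    (V : ℕ → X → ℝ) (hV : DecWeightSys V)
    (f : X → ℝ) (hf : ∀ x, 0 ≤ f x) :
    (∃ n : ℕ, ∃ C : ℝ, ∀ x, f x * V n x ≤ C) ↔
    (∀ v : X → ℝ, InNachbin V v → ∃ C : ℝ, ∀ x, f x * v x ≤ C) := by
  constructor
  · rintro ⟨n, C, hC⟩ v ⟨hv0, -, hv⟩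
    obtain ⟨D, hD⟩ := hv n
    refine ⟨C * D, fun x => ?_⟩
    have hp := hV.2.1 n x
    have h1 : 0 ≤ f x * V n x := mul_nonneg (hf x) hp.le
    calc f x * v x = (f x * V n x) * (v x / V n x) := by field_simp
      _ ≤ C * D := mul_le_mul (hC x) (hD x) (div_nonneg (hv0 x) hp.le) (h1.trans (hC x))
  · intro h
    by_contra! hcon
    choose x hx using fun n : ℕ => hcon n n
    obtain ⟨v, hv, hle⟩ := exists_inNachbin_ge_on_seq V hV x
    obtain ⟨C, hC⟩ := h v hv
    obtain ⟨n, hn⟩ := exists_nat_ge C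
    have h1 := mul_le_mul_of_nonneg_left (hle n) (hf (x n))
    linarith [hx n, hC (x n)]
end

section
/- Let X be a completely regular Hausdorff topological space, let w be a positive function on X, and let V = (v_n)_{n∈ℕ} be a decreasing weight system on X such that for every n ∈ ℕ there are m ≥ n and C > 0 with v_m(x) ≤ C·w(x)·v_n(x) for all x ∈ X. Then for every v in the maximal Nachbin family V̄ associated with V there exists v̄ ∈ V̄ with v(x) ≤ w(x)·v̄(x) for all x ∈ X. -/
/-- if `v_m ≤ C·w·v_n` (suitable `m ≥ n`) then every member `v` of the
maximal Nachbin family is dominated by `w·v̄` for some member `v̄`. -/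
theorem Nachbin_absorbs_weight
    {X : Type*} [TopologicalSpace X] [CompletelyRegularSpace X] [T2Space X]
    (w : X → ℝ) (hw : ∀ x, 0 < w x)
    (V : ℕ → X → ℝ) (hV : DecWeightSys V)
    (hcond : ∀ n : ℕ, ∃ m : ℕ, n ≤ m ∧ ∃ C : ℝ, 0 < C ∧ ∀ x, V m x ≤ C * w x * V n x) :
    ∀ v : X → ℝ, InNachbin V v →
      ∃ vb : X → ℝ, InNachbin V vb ∧ ∀ x, v x ≤ w x * vb x := by
  rintro v ⟨-, -, hvb⟩
  obtain ⟨hcont, hpos, -⟩ := hV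
  have key : ∀ n, ∃ D : ℝ, 0 ≤ D ∧ ∀ x, v x / w x ≤ D * V n x := by
    intro n
    obtain ⟨m, -, C, hC, hm⟩ := hcond n
    obtain ⟨A, hA⟩ := hvb m
    -- `A` is replaced by `max A 0`: it may be negative when `X` is empty.
    refine ⟨max A 0 * C, by positivity, fun x => ?_⟩
    rw [div_le_iff₀ (hw x)]
    calc v x ≤ A * V m x := (div_le_iff₀ (hpos m x)).1 (hA x)
      _ ≤ max A 0 * V m x := mul_le_mul_of_nonneg_right (le_max_left _ _) (hpos m x).le
      _ ≤ max A 0 * (C * w x * V n x) := mul_le_mul_of_nonneg_left (hm x) (le_max_right _ _)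
      _ = max A 0 * C * V n x * w x := by ring
  choose D hD hvD using key
  have hnn : ∀ n x, 0 ≤ D n * V n x := fun n x => mul_nonneg (hD n) (hpos n x).le
  have hbdd : ∀ x, BddBelow (Set.range fun n => D n * V n x) := by
    rintro x
    refine ⟨0, ?_⟩
    rintro _ ⟨n, rfl⟩
    exact hnn n x
  refine ⟨fun x => ⨅ n, D n * V n x, ⟨fun x => le_ciInf fun n => hnn n x, ?_, fun n => ?_⟩, ?_⟩
  · exact upperSemicontinuous_ciInf hbdd
      fun n => (continuous_const.mul (hcont n)).upperSemicontinuous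
  · exact ⟨D n, fun x => (div_le_iff₀ (hpos n x)).2 (ciInf_le (hbdd x) n)⟩
  · intro x
    rw [mul_comm, ← div_le_iff₀ (hw x)]
    exact le_ciInf fun n => hvD n x
end
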